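/- Let s ≥ 1, let a : ℕ → ℂ be bounded by 1 and admit correlations for Cesàro averages on a sequence of intervals I = (I_N) with |I_N| → ∞. Then the star-uniformity seminorm satisfies ‖a‖_{U^s_*(I)} ≤ 4·‖a‖_{U^s(I)}. -/

import Mathlib

open Filter Finset Topology

/-- Gowers uniformity norm `U^s(ℤ_L)` of the `L`-periodic sequence `n ↦ a (n % L)`. -/
noncomputable def gowersNorm (L : ℕ) : ℕ → (ℕ → ℂ) → ℝ
  | 0, _ => 0
  | 1, a => ‖(L : ℂ)⁻¹ * ∑ m ∈ Finset.range L, a (m % L)‖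
  | (s + 2), a =>
      ((L : ℝ)⁻¹ * ∑ h ∈ Finset.range L,
        gowersNorm L (s + 1)
          (fun n => a ((n + h) % L) * (starRingEnd ℂ) (a (n % L))) ^ (2 ^ (s + 1)))
        ^ (((2 : ℝ) ^ (s + 2))⁻¹)

/-- The sequence `a · 1_{[H]}` (i.e. `a(1),…,a(H),0,0,…`), placed on residues `0,…,H-1`. -/
noncomputable def truncSeq (a : ℕ → ℂ) (H : ℕ) : ℕ → ℂ := fun n => if n < H then a (n + 1) else 0

/-- `‖a‖_{U^s[H]} = ‖a·1_{[H]}‖_{U^s(ℤ_{2H})} / ‖1_{[H]}‖_{U^s(ℤ_{2H})}`. -/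
noncomputable def UsShort (s H : ℕ) (a : ℕ → ℂ) : ℝ :=
  gowersNorm (2 * H) s (truncSeq a H) / gowersNorm (2 * H) s (truncSeq (fun _ => 1) H)

/-- `ε · h`. -/
def epsDot {s : ℕ} (ε : Fin s → Bool) (h : Fin s → ℕ) : ℕ := ∑ j, if ε j then h j else 0

/-- The Gowers cube product `∏_{ε∈{0,1}^s} C^{|ε|} a(n + ε·h)`. -/
noncomputable def cubeProd (a : ℕ → ℂ) {s : ℕ} (h : Fin s → ℕ) (n : ℕ) : ℂ :=
  ∏ ε : Fin s → Bool,
    if (Finset.univ.filter fun j => ε j = true).card % 2 = 1 then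
      (starRingEnd ℂ) (a (n + epsDot ε h))
    else a (n + epsDot ε h)

/-- Cesàro average of `f` over the interval `I N`. -/
noncomputable def cesaroAvg (I : ℕ → Finset ℕ) (f : ℕ → ℂ) (N : ℕ) : ℂ :=
  ((I N).card : ℂ)⁻¹ * ∑ n ∈ I N, f n

/-!
Let `r h` be the real part of the cube correlation `lim_N 𝔼_{n ∈ I_N} ∏_ε C^{|ε|} a (n + ε ⬝ h)`.
As a function of each coordinate of `h` separately, `r` is a limit of Gram matrices, hence
positive definite: it is the autocorrelation of a stationary sequence of vectors in a Hilbert space.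

By Jensen's inequality and shift invariance, `(𝔼_{n ∈ I_N} ‖S_n a‖_{U^s[H]}) ^ 2 ^ s` is
asymptotically at most the mean of `r` with weights proportional to `(H - |h_1| - ⋯ - |h_s|)₊`.
The sections of this weight in one coordinate are mixtures of triangles, over which the means of a
positive definite function are almost decreasing in the side length. Up to `O (K / H)` the weighted
mean is therefore at most the mean of `r` over a product of `s` triangles of any fixed side `K`.

It remains to identify the limit of the triangular means as `K → ∞` with the limit `u ^ 2 ^ s` of
the means over `[K] ^ s`. This is the mean ergodic theorem applied one coordinate at a time, in a
quantitative form that is uniform in the other coordinates. The resulting bound has constant `1`.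
-/

universe u

section PositiveDefinite

/-- Real positive definite functions on `ℤ` with value at most `1` at the origin. They play the
role of autocorrelations of stationary sequences of vectors of norm at most `1`. -/
structure IsAutocorrelation (d : ℤ → ℝ) : Prop where
  posSemidef : (Matrix.circulant d).PosSemidef
  apply_zero_le_one : d 0 ≤ 1

/-- The average of `d` over the differences of two elements of a window of length `T`. -/
noncomputable def fejerMean (T : ℕ) (d : ℤ → ℝ) : ℝ :=
  ((T : ℝ) ^ 2)⁻¹ * ∑ i ∈ range T, ∑ k ∈ range T, d (i - k)

/-- The average of `d` over `1, …, T`. -/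
noncomputable def forwardMean (T : ℕ) (d : ℤ → ℝ) : ℝ :=
  (T : ℝ)⁻¹ * ∑ i ∈ range T, d (i + 1)

lemma exists_inner_eq_of_posSemidef {X : Type u} {M : Matrix X X ℝ} (hM : M.PosSemidef) :
    ∃ (E : Type u) (_ : NormedAddCommGroup E) (_ : InnerProductSpace ℝ E) (x : X → E),
      ∀ i j, inner ℝ (x i) (x j) = M i j := by
  let K : Matrix X X (ℝ →L[ℝ] ℝ) := Matrix.of fun i j => M i j • 1
  have hK : K.PosSemidef := by
    refine ((RKHS.posSemidef_tfae (K := K)).out 0 2).mpr (And.intro ?_ fun v => ?_)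
    · ext i j
      simpa [K] using hM.isHermitian.apply i j
    · refine (hM.2 v).trans_eq ?_
      rw [Finsupp.sum_comm]
      simp [K, mul_comm, mul_left_comm]
  have : Fact K.PosSemidef := ⟨hK⟩
  refine ⟨RKHS.OfKernel K, inferInstance, inferInstance, fun i => RKHS.kerFun _ i (1 : ℝ),
    fun i j => ?_⟩
  rw [real_inner_comm, ← RKHS.kernel_inner, RKHS.OfKernel.kernel_ofKernel]
  simp [K]

section StationarySequence

variable {E : Type*} [NormedAddCommGroup E] [InnerProductSpace ℝ E]

/-- The average of `x` over the window `t, t + 1, …, t + R - 1`. -/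
noncomputable def windowMean (x : ℤ → E) (R : ℕ) (t : ℤ) : E :=
  (R : ℝ)⁻¹ • ∑ i ∈ range R, x (t + i)

/-- The mean of `x` over a window of length `T` containing `t`, averaged over all such windows: an
approximation of the shift-invariant part of `x` that treats the two sides of `t` alike. -/
noncomputable def doubleWindowMean (x : ℤ → E) (T : ℕ) (t : ℤ) : E :=
  (T : ℝ)⁻¹ • ∑ i ∈ range T, windowMean x T (t - i)

lemma norm_inv_smul_sum_range_le {y : ℕ → E} {C : ℝ} {R : ℕ} (hR : 0 < R)
    (hy : ∀ i ∈ range R, ‖y i‖ ≤ C) : ‖(R : ℝ)⁻¹ • ∑ i ∈ range R, y i‖ ≤ C := by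
  have hR' : (0 : ℝ) < R := by exact_mod_cast hR
  rw [norm_smul, norm_inv, Real.norm_natCast, inv_mul_le_iff₀ hR']
  simpa using norm_sum_le_of_le (range R) hy

lemma inv_smul_sum_range_sub_const (y : ℕ → E) (z : E) {R : ℕ} (hR : 0 < R) :
    (R : ℝ)⁻¹ • ∑ i ∈ range R, y i - z = (R : ℝ)⁻¹ • ∑ i ∈ range R, (y i - z) := by
  have hR' : (R : ℝ) ≠ 0 := by positivity
  rw [Finset.sum_sub_distrib, smul_sub, sum_const, card_range, ← Nat.cast_smul_eq_nsmul ℝ,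
    inv_smul_smul₀ hR']

lemma sum_windowMean_comm (x : ℤ → E) (R K : ℕ) :
    (K : ℝ)⁻¹ • ∑ k ∈ range K, windowMean x R k =
      (R : ℝ)⁻¹ • ∑ i ∈ range R, windowMean x K i := by
  simp only [windowMean, ← Finset.smul_sum]
  rw [Finset.sum_comm, smul_comm]
  simp only [add_comm]

section Bounded

variable {x : ℤ → E}

lemma norm_windowMean_le_one (hx : ∀ t, ‖x t‖ ≤ 1) {R : ℕ} (hR : 0 < R) (t : ℤ) :
    ‖windowMean x R t‖ ≤ 1 :=
  norm_inv_smul_sum_range_le hR fun _ _ => hx _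

lemma norm_windowMean_add_one_sub_le (hx : ∀ t, ‖x t‖ ≤ 1) (R : ℕ) (t : ℤ) :
    ‖windowMean x R (t + 1) - windowMean x R t‖ ≤ 2 / R := by
  have telescope : ∑ i ∈ range R, (x (t + 1 + i) - x (t + i)) = x (t + R) - x t := by
    simpa [add_assoc, add_comm (1 : ℤ)] using Finset.sum_range_sub (fun i : ℕ => x (t + i)) R
  rw [windowMean, windowMean, ← smul_sub, ← Finset.sum_sub_distrib, telescope, norm_smul,
    norm_inv, Real.norm_natCast, div_eq_inv_mul]
  gcongr
  linarith [norm_sub_le (x (t + R)) (x t), hx (t + R), hx t]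

lemma norm_windowMean_add_sub_le (hx : ∀ t, ‖x t‖ ≤ 1) (R : ℕ) (t : ℤ) (k : ℕ) :
    ‖windowMean x R (t + k) - windowMean x R t‖ ≤ 2 * k / R := by
  induction k with
  | zero => simp
  | succ k ih =>
    calc ‖windowMean x R (t + (k + 1 : ℕ)) - windowMean x R t‖
        ≤ ‖windowMean x R (t + k + 1) - windowMean x R (t + k)‖
          + ‖windowMean x R (t + k) - windowMean x R t‖ := by
          rw [Nat.cast_succ, ← add_assoc]
          exact norm_sub_le_norm_sub_add_norm_sub _ _ _
      _ ≤ 2 / R + 2 * k / R := add_le_add (norm_windowMean_add_one_sub_le hx R _) ih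
      _ = 2 * (k + 1 : ℕ) / R := by push_cast; ring

lemma norm_doubleWindowMean_sub_le (hx : ∀ t, ‖x t‖ ≤ 1) {T : ℕ} (hT : 0 < T) (k : ℕ) :
    ‖doubleWindowMean x T k - doubleWindowMean x T 0‖ ≤ 2 * k / T := by
  rw [doubleWindowMean, doubleWindowMean, ← smul_sub, ← Finset.sum_sub_distrib]
  refine norm_inv_smul_sum_range_le hT fun i _ => ?_
  simpa [add_comm, sub_eq_add_neg] using norm_windowMean_add_sub_le hx T (0 - i) k

end Bounded

section Stationary

variable {d : ℤ → ℝ} {x : ℤ → E}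

lemma norm_le_one_of_stationary (hx : ∀ i j, inner ℝ (x i) (x j) = d (i - j)) (hd : d 0 ≤ 1)
    (t : ℤ) : ‖x t‖ ≤ 1 := by
  rw [← sq_le_one_iff₀ (norm_nonneg _), ← real_inner_self_eq_norm_sq, hx, sub_self]
  exact hd

lemma sq_norm_windowMean (hx : ∀ i j, inner ℝ (x i) (x j) = d (i - j)) (R : ℕ)
    (t : ℤ) : ‖windowMean x R t‖ ^ 2 = fejerMean R d := by
  rw [← real_inner_self_eq_norm_sq, windowMean, fejerMean, inner_smul_left, inner_smul_right,
    sum_inner, conj_trivial, ← mul_assoc, ← mul_inv, ← sq]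
  simp only [inner_sum, hx, add_sub_add_left_eq_sub]

lemma norm_windowMean_eq_norm_windowMean_zero
    (hx : ∀ i j, inner ℝ (x i) (x j) = d (i - j)) (R : ℕ) (t : ℤ) :
    ‖windowMean x R t‖ = ‖windowMean x R 0‖ := by
  rw [← sq_eq_sq₀ (norm_nonneg _) (norm_nonneg _), sq_norm_windowMean hx, sq_norm_windowMean hx]

lemma norm_windowMean_le (hx : ∀ i j, inner ℝ (x i) (x j) = d (i - j)) (hd : d 0 ≤ 1)
    {R K : ℕ} (hR : 0 < R) (hK : 0 < K) :
    ‖windowMean x R 0‖ ≤ ‖windowMean x K 0‖ + 2 * K / R := by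
  have hx1 := norm_le_one_of_stationary hx hd
  have double_le : ‖(K : ℝ)⁻¹ • ∑ k ∈ range K, windowMean x R k‖ ≤ ‖windowMean x K 0‖ := by
    rw [sum_windowMean_comm]
    exact norm_inv_smul_sum_range_le hR
      fun i _ => (norm_windowMean_eq_norm_windowMean_zero hx K i).le
  have sub_le :
      ‖(K : ℝ)⁻¹ • ∑ k ∈ range K, windowMean x R k - windowMean x R 0‖ ≤ 2 * K / R := by
    rw [inv_smul_sum_range_sub_const _ _ hK]
    refine norm_inv_smul_sum_range_le hK fun k hk => ?_
    have hkK : (k : ℝ) ≤ K := by exact_mod_cast (mem_range.mp hk).le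
    calc _ ≤ 2 * (k : ℝ) / R := by simpa using norm_windowMean_add_sub_le hx1 R 0 k
      _ ≤ 2 * K / R := by gcongr
  have := norm_le_norm_add_norm_sub ((K : ℝ)⁻¹ • ∑ k ∈ range K, windowMean x R k)
    (windowMean x R 0)
  linarith

lemma inner_doubleWindowMean (hx : ∀ i j, inner ℝ (x i) (x j) = d (i - j)) (T : ℕ) (t : ℤ) :
    inner ℝ (x t) (doubleWindowMean x T t) = fejerMean T d := by
  simp only [doubleWindowMean, windowMean, fejerMean, inner_smul_right, inner_sum, hx,
    ← Finset.mul_sum]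
  rw [← mul_assoc, ← mul_inv, ← sq]
  congr! 4
  ring

lemma sq_norm_doubleWindowMean_le (hx : ∀ i j, inner ℝ (x i) (x j) = d (i - j)) {T : ℕ}
    (hT : 0 < T) (t : ℤ) :
    ‖doubleWindowMean x T t‖ ^ 2 ≤ fejerMean T d := by
  rw [← sq_norm_windowMean hx T 0]
  gcongr
  exact norm_inv_smul_sum_range_le hT
    fun i _ => (norm_windowMean_eq_norm_windowMean_zero hx T (t - i)).le

lemma inner_windowMean_one (hx : ∀ i j, inner ℝ (x i) (x j) = d (i - j)) (T : ℕ) :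
    inner ℝ (x 0) (windowMean x T 1) = forwardMean T d := by
  simp only [real_inner_comm _ (x 0), windowMean, forwardMean, inner_smul_left, sum_inner, hx,
    conj_trivial, sub_zero, add_comm]

lemma fejerMean_sub_le_inner_windowMean
    (hx : ∀ i j, inner ℝ (x i) (x j) = d (i - j)) (hd : d 0 ≤ 1) {T T' : ℕ} (hT : 0 < T)
    (hT' : 0 < T') :
    fejerMean T' d - 2 * T / T' ≤ inner ℝ (windowMean x T 1) (doubleWindowMean x T' 0) := by
  have hx1 := norm_le_one_of_stationary hx hd
  have hT0 : (0 : ℝ) < T := by exact_mod_cast hT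
  have term_le : ∀ i ∈ range T,
      fejerMean T' d - 2 * T / T' ≤ inner ℝ (x (1 + i)) (doubleWindowMean x T' 0) := by
    intro i hi
    have hiT : ((1 + i : ℕ) : ℝ) ≤ T := by exact_mod_cast (by grind : 1 + i ≤ T)
    have : inner ℝ (x (1 + i)) (doubleWindowMean x T' (1 + i) - doubleWindowMean x T' 0)
        ≤ 2 * T / T' :=
      calc _ ≤ ‖x (1 + i)‖ * ‖doubleWindowMean x T' (1 + i) - doubleWindowMean x T' 0‖ :=
            real_inner_le_norm _ _
        _ ≤ 1 * (2 * (1 + i : ℕ) / T') := by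
            gcongr
            · exact hx1 _
            · exact_mod_cast norm_doubleWindowMean_sub_le hx1 hT' (1 + i)
        _ ≤ 2 * T / T' := by rw [one_mul]; gcongr
    rw [inner_sub_right, inner_doubleWindowMean hx] at this
    linarith
  rw [windowMean, inner_smul_left, sum_inner, conj_trivial, le_inv_mul_iff₀ hT0]
  simpa only [card_range, nsmul_eq_mul] using Finset.card_nsmul_le_sum _ _ _ term_le

end Stationary

end StationarySequence

namespace IsAutocorrelation

variable {d : ℤ → ℝ}

lemma exists_stationary (hd : IsAutocorrelation d) :
    ∃ (E : Type) (_ : NormedAddCommGroup E) (_ : InnerProductSpace ℝ E) (x : ℤ → E),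
      ∀ i j, inner ℝ (x i) (x j) = d (i - j) :=
  exists_inner_eq_of_posSemidef hd.posSemidef

lemma fejerMean_nonneg (hd : IsAutocorrelation d) (T : ℕ) : 0 ≤ fejerMean T d := by
  obtain ⟨E, _, _, x, hx⟩ := hd.exists_stationary
  rw [← sq_norm_windowMean hx T 0]
  positivity

lemma fejerMean_le_add (hd : IsAutocorrelation d) {R K : ℕ} (hR : 0 < R) (hK : 0 < K) :
    fejerMean R d ≤ fejerMean K d + 4 * K / R := by
  obtain ⟨E, _, _, x, hx⟩ := hd.exists_stationary
  have hx1 := norm_le_one_of_stationary hx hd.apply_zero_le_one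
  have hR1 := norm_windowMean_le_one hx1 hR 0
  have hK1 := norm_windowMean_le_one hx1 hK 0
  rw [← sq_norm_windowMean hx R 0, ← sq_norm_windowMean hx K 0]
  calc ‖windowMean x R 0‖ ^ 2
      = ‖windowMean x K 0‖ ^ 2 + (‖windowMean x R 0‖ - ‖windowMean x K 0‖)
          * (‖windowMean x R 0‖ + ‖windowMean x K 0‖) := by ring
    _ ≤ ‖windowMean x K 0‖ ^ 2 + 2 * K / R * (1 + 1) := by
        gcongr
        linarith [norm_windowMean_le hx hd.apply_zero_le_one hR hK]
    _ = ‖windowMean x K 0‖ ^ 2 + 4 * K / R := by ring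

lemma sq_forwardMean_sub_fejerMean_le (hd : IsAutocorrelation d) {T T' : ℕ} (hT : 0 < T)
    (hT' : 0 < T') :
    (forwardMean T d - fejerMean T' d) ^ 2 ≤ fejerMean T d - fejerMean T' d + 4 * T / T' := by
  obtain ⟨E, _, _, x, hx⟩ := hd.exists_stationary
  have hx1 := norm_le_one_of_stationary hx hd.apply_zero_le_one
  rw [← inner_windowMean_one hx, ← inner_doubleWindowMean hx T' 0, ← inner_sub_right]
  calc inner ℝ (x 0) (windowMean x T 1 - doubleWindowMean x T' 0) ^ 2
      ≤ ‖windowMean x T 1 - doubleWindowMean x T' 0‖ ^ 2 := by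
        rw [sq_le_sq, abs_norm]
        calc _ ≤ ‖x 0‖ * ‖windowMean x T 1 - doubleWindowMean x T' 0‖ :=
              abs_real_inner_le_norm _ _
          _ ≤ _ := mul_le_of_le_one_left (norm_nonneg _) (hx1 0)
    _ = fejerMean T d - 2 * inner ℝ (windowMean x T 1) (doubleWindowMean x T' 0)
          + ‖doubleWindowMean x T' 0‖ ^ 2 := by
        rw [norm_sub_sq_real, sq_norm_windowMean hx]
    _ ≤ fejerMean T d - 2 * (fejerMean T' d - 2 * T / T') + fejerMean T' d := by
        gcongr
        · exact fejerMean_sub_le_inner_windowMean hx hd.apply_zero_le_one hT hT'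
        · exact sq_norm_doubleWindowMean_le hx hT' 0
    _ = _ := by rw [inner_doubleWindowMean hx]; ring

end IsAutocorrelation

end PositiveDefinite

section WeightedMeans

/-- The integral of `f` against the finitely supported signed measure `κ`. -/
noncomputable def weightedMean (κ : ℤ →₀ ℝ) (f : ℤ → ℝ) : ℝ := κ.sum fun t w => w * f t

/-- Finitely supported probability measures on `ℤ`, given by their weights. -/
structure IsProbabilityWeight (κ : ℤ →₀ ℝ) : Prop where
  nonneg : 0 ≤ κ
  weightedMean_one : weightedMean κ (fun _ => 1) = 1

/-- The weights for which `weightedMean` is `fejerMean`. -/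
noncomputable def fejerWeight (T : ℕ) : ℤ →₀ ℝ :=
  ((T : ℝ) ^ 2)⁻¹ • ∑ i ∈ range T, ∑ k ∈ range T, Finsupp.single ((i : ℤ) - k) 1

/-- The weights for which `weightedMean` is `forwardMean`. -/
noncomputable def forwardWeight (T : ℕ) : ℤ →₀ ℝ :=
  (T : ℝ)⁻¹ • ∑ i ∈ range T, Finsupp.single ((i : ℤ) + 1) 1

lemma weightedMean_eq_linearCombination (κ : ℤ →₀ ℝ) (f : ℤ → ℝ) :
    weightedMean κ f = Finsupp.linearCombination ℝ f κ := rfl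

lemma weightedMean_single_one (t : ℤ) (f : ℤ → ℝ) :
    weightedMean (Finsupp.single t 1) f = f t := by
  simp [weightedMean]

lemma weightedMean_fejerWeight (T : ℕ) (f : ℤ → ℝ) :
    weightedMean (fejerWeight T) f = fejerMean T f := by
  simp [weightedMean_eq_linearCombination, fejerWeight, fejerMean]

lemma weightedMean_forwardWeight (T : ℕ) (f : ℤ → ℝ) :
    weightedMean (forwardWeight T) f = forwardMean T f := by
  simp [weightedMean_eq_linearCombination, forwardWeight, forwardMean]

lemma weightedMean_comm (κ μ : ℤ →₀ ℝ) (f : ℤ → ℤ → ℝ) :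
    weightedMean κ (fun t => weightedMean μ fun u => f t u) =
      weightedMean μ fun u => weightedMean κ fun t => f t u := by
  simp only [weightedMean, Finsupp.mul_sum]
  rw [Finsupp.sum_comm]
  simp only [mul_left_comm]

lemma isProbabilityWeight_fejerWeight {T : ℕ} (hT : 0 < T) :
    IsProbabilityWeight (fejerWeight T) where
  nonneg := smul_nonneg (by positivity) <| Finset.sum_nonneg fun i _ =>
    Finset.sum_nonneg fun k _ => Finsupp.single_nonneg.mpr zero_le_one
  weightedMean_one := by
    simp only [weightedMean_fejerWeight, fejerMean, sum_const, card_range, nsmul_eq_mul, mul_one]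
    field_simp

lemma isProbabilityWeight_forwardWeight {T : ℕ} (hT : 0 < T) :
    IsProbabilityWeight (forwardWeight T) where
  nonneg := smul_nonneg (by positivity) <| Finset.sum_nonneg fun i _ =>
    Finsupp.single_nonneg.mpr zero_le_one
  weightedMean_one := by
    rw [weightedMean_forwardWeight]
    simp [forwardMean, hT.ne']

lemma isAutocorrelation_weightedMean {κ : ℤ →₀ ℝ} (hκ : IsProbabilityWeight κ)
    {R : ℤ → ℤ → ℝ} (hR : ∀ u, IsAutocorrelation (R u)) :
    IsAutocorrelation fun t => weightedMean κ fun u => R u t where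
  posSemidef := by
    have : Matrix.circulant (fun t => weightedMean κ fun u => R u t) =
        ∑ u ∈ κ.support, κ u • Matrix.circulant (R u) := by
      ext i j
      simp [weightedMean, Finsupp.sum, Matrix.sum_apply]
    rw [this]
    exact Matrix.posSemidef_sum _ fun u _ => (hR u).posSemidef.smul (hκ.nonneg u)
  apply_zero_le_one := by
    rw [← hκ.weightedMean_one]
    exact Finset.sum_le_sum fun u _ =>
      mul_le_mul_of_nonneg_left (hR u).apply_zero_le_one (hκ.nonneg u)

/-- The mean of `r` with respect to the product of the measures `κ j`. -/
noncomputable def productMean : {s : ℕ} → (Fin s → ℤ →₀ ℝ) → ((Fin s → ℤ) → ℝ) → ℝ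
  | 0, _, r => r ![]
  | _ + 1, κ, r => weightedMean (κ 0) fun t => productMean (Fin.tail κ) fun h => r (Fin.cons t h)

lemma productMean_eq_weightedMean {s : ℕ} (κ : Fin s → ℤ →₀ ℝ) (r : (Fin s → ℤ) → ℝ)
    (j : Fin s) :
    productMean κ r =
      weightedMean (κ j) fun t => productMean (Function.update κ j (Finsupp.single t 1)) r := by
  induction s with
  | zero => exact j.elim0
  | succ s ih =>
    cases j using Fin.cases with
    | zero => simp [productMean, weightedMean_single_one, Fin.tail_update_zero]
    | succ j =>
      simp only [productMean, Fin.tail_update_succ,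
        Function.update_of_ne (Fin.succ_ne_zero j).symm]
      simp_rw [fun t => ih (Fin.tail κ) (fun h => r (Fin.cons t h)) j]
      rw [weightedMean_comm]
      rfl

lemma productMean_update {s : ℕ} (κ : Fin s → ℤ →₀ ℝ) (r : (Fin s → ℤ) → ℝ) (j : Fin s)
    (μ : ℤ →₀ ℝ) :
    productMean (Function.update κ j μ) r =
      weightedMean μ fun t => productMean (Function.update κ j (Finsupp.single t 1)) r := by
  rw [productMean_eq_weightedMean (Function.update κ j μ) r j]
  simp only [Function.update_self, Function.update_idem]

/-- Functions on `ℤ ^ s` that are an autocorrelation in each coordinate separately. -/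
def IsMultiAutocorrelation {s : ℕ} (r : (Fin s → ℤ) → ℝ) : Prop :=
  ∀ (j : Fin s) (h : Fin s → ℤ), IsAutocorrelation fun t => r (Function.update h j t)

lemma isAutocorrelation_productMean {s : ℕ} {κ : Fin s → ℤ →₀ ℝ}
    (hκ : ∀ j, IsProbabilityWeight (κ j)) {R : ℤ → (Fin s → ℤ) → ℝ}
    (hR : ∀ h, IsAutocorrelation fun t => R t h) :
    IsAutocorrelation fun t => productMean κ (R t) := by
  induction s with
  | zero => exact hR _
  | succ s ih =>
    exact isAutocorrelation_weightedMean (hκ 0)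
      (R := fun u t => productMean (Fin.tail κ) fun h => R t (Fin.cons u h))
      fun u => ih (fun j => hκ j.succ) fun h => hR _

namespace IsMultiAutocorrelation

lemma apply_cons {s : ℕ} {r : (Fin (s + 1) → ℤ) → ℝ} (hr : IsMultiAutocorrelation r)
    (h : Fin s → ℤ) : IsAutocorrelation fun t => r (Fin.cons t h) := by
  simpa only [Fin.update_cons_zero] using hr 0 (Fin.cons 0 h)

lemma cons_left {s : ℕ} {r : (Fin (s + 1) → ℤ) → ℝ} (hr : IsMultiAutocorrelation r)
    (t : ℤ) : IsMultiAutocorrelation fun h => r (Fin.cons t h) := fun j h => by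
  simpa only [Fin.cons_update] using hr j.succ (Fin.cons t h)

lemma isAutocorrelation_productMean_update {s : ℕ} {r : (Fin s → ℤ) → ℝ}
    (hr : IsMultiAutocorrelation r) {κ : Fin s → ℤ →₀ ℝ} (j : Fin s)
    (hκ : ∀ i ≠ j, IsProbabilityWeight (κ i)) :
    IsAutocorrelation fun t => productMean (Function.update κ j (Finsupp.single t 1)) r := by
  induction s with
  | zero => exact j.elim0
  | succ s ih =>
    cases j using Fin.cases with
    | zero =>
      simp only [productMean, weightedMean_single_one, Fin.tail_update_zero, Function.update_self]
      exact isAutocorrelation_productMean (fun i => hκ i.succ (Fin.succ_ne_zero i)) hr.apply_cons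
    | succ j =>
      simp only [productMean, Fin.tail_update_succ,
        Function.update_of_ne (Fin.succ_ne_zero j).symm]
      exact isAutocorrelation_weightedMean (hκ 0 (Fin.succ_ne_zero j).symm) fun u =>
        ih (hr.cons_left u) j fun i hi => hκ i.succ (by simpa using hi)

end IsMultiAutocorrelation

end WeightedMeans

section HybridMeans

/-- The mean of `r` over boxes of side lengths `τ`, a forward mean in the coordinates in `A` and a
Fejér mean in the others. -/
noncomputable def hybridMean {s : ℕ} (r : (Fin s → ℤ) → ℝ) (A : Finset (Fin s))
    (τ : Fin s → ℕ) : ℝ :=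
  productMean (A.piecewise (forwardWeight ∘ τ) (fejerWeight ∘ τ)) r

/-- The function of the `j`-th coordinate that remains after averaging `r` over all the other
coordinates as in `hybridMean`. -/
noncomputable def hybridSlice {s : ℕ} (r : (Fin s → ℤ) → ℝ) (A : Finset (Fin s))
    (τ : Fin s → ℕ) (j : Fin s) (t : ℤ) : ℝ :=
  productMean (Function.update (A.piecewise (forwardWeight ∘ τ) (fejerWeight ∘ τ)) j
    (Finsupp.single t 1)) r

variable {s : ℕ} {r : (Fin s → ℤ) → ℝ}

lemma IsMultiAutocorrelation.isAutocorrelation_hybridSlice (hr : IsMultiAutocorrelation r)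
    (A : Finset (Fin s)) {τ : Fin s → ℕ} (hτ : ∀ i, 0 < τ i) (j : Fin s) :
    IsAutocorrelation (hybridSlice r A τ j) := by
  refine hr.isAutocorrelation_productMean_update j fun i _ => ?_
  by_cases hi : i ∈ A
  · rw [piecewise_eq_of_mem _ _ _ hi]
    exact isProbabilityWeight_forwardWeight (hτ i)
  · rw [piecewise_eq_of_notMem _ _ _ hi]
    exact isProbabilityWeight_fejerWeight (hτ i)

lemma hybridMean_insert (r : (Fin s → ℤ) → ℝ) (A : Finset (Fin s)) (τ : Fin s → ℕ) (j : Fin s) :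
    hybridMean r (insert j A) τ = forwardMean (τ j) (hybridSlice r A τ j) := by
  rw [hybridMean, piecewise_insert, productMean_update, Function.comp_apply,
    weightedMean_forwardWeight]
  rfl

lemma hybridMean_update {A : Finset (Fin s)} {j : Fin s} (hj : j ∉ A) (r : (Fin s → ℤ) → ℝ)
    (τ : Fin s → ℕ) (K : ℕ) :
    hybridMean r A (Function.update τ j K) = fejerMean K (hybridSlice r A τ j) := by
  have : A.piecewise (forwardWeight ∘ Function.update τ j K) (fejerWeight ∘ Function.update τ j K)
      = Function.update (A.piecewise (forwardWeight ∘ τ) (fejerWeight ∘ τ)) j (fejerWeight K) := by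
    ext1 i
    rcases eq_or_ne i j with rfl | hij
    · simp [hj]
    · simp [hij, Finset.piecewise]
  rw [hybridMean, this, productMean_update, weightedMean_fejerWeight]
  rfl

lemma hybridMean_eq_fejerMean {A : Finset (Fin s)} {j : Fin s} (hj : j ∉ A)
    (r : (Fin s → ℤ) → ℝ) (τ : Fin s → ℕ) :
    hybridMean r A τ = fejerMean (τ j) (hybridSlice r A τ j) := by
  rw [← hybridMean_update hj, Function.update_eq_self]

namespace IsMultiAutocorrelation

lemma hybridMean_empty_nonneg [NeZero s] (hr : IsMultiAutocorrelation r) {τ : Fin s → ℕ}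
    (hτ : ∀ j, 0 < τ j) : 0 ≤ hybridMean r ∅ τ := by
  rw [hybridMean_eq_fejerMean (notMem_empty (0 : Fin s))]
  exact (hr.isAutocorrelation_hybridSlice ∅ hτ 0).fejerMean_nonneg _

lemma hybridMean_empty_le_add (hr : IsMultiAutocorrelation r) {τ σ : Fin s → ℕ}
    (hτ : ∀ j, 0 < τ j) (hσ : ∀ j, 0 < σ j) :
    hybridMean r ∅ τ ≤ hybridMean r ∅ σ + ∑ j, 4 * (σ j : ℝ) / τ j := by
  suffices ∀ B : Finset (Fin s),
      hybridMean r ∅ τ ≤ hybridMean r ∅ (B.piecewise σ τ) + ∑ j ∈ B, 4 * (σ j : ℝ) / τ j by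
    simpa using this univ
  intro B
  induction B using Finset.induction_on with
  | empty => simp
  | insert j B hj ih =>
    have hpos : ∀ i, 0 < B.piecewise σ τ i := fun i => B.piecewise_cases σ τ (0 < ·) (hσ i) (hτ i)
    have hstep := (hr.isAutocorrelation_hybridSlice ∅ hpos j).fejerMean_le_add (hpos j) (hσ j)
    rw [← hybridMean_eq_fejerMean (notMem_empty j), ← hybridMean_update (notMem_empty j),
      piecewise_eq_of_notMem _ _ _ hj] at hstep
    rw [piecewise_insert, sum_insert hj]
    linarith

lemma sq_hybridMean_insert_sub_le (hr : IsMultiAutocorrelation r) {A : Finset (Fin s)}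
    {j : Fin s} (hj : j ∉ A) {τ : Fin s → ℕ} (hτ : ∀ i, 0 < τ i) {K : ℕ} (hK : 0 < K) :
    (hybridMean r (insert j A) τ - hybridMean r A (Function.update τ j K)) ^ 2 ≤
      hybridMean r A τ - hybridMean r A (Function.update τ j K) + 4 * τ j / K := by
  rw [hybridMean_insert, hybridMean_update hj, hybridMean_eq_fejerMean hj]
  exact (hr.isAutocorrelation_hybridSlice A hτ j).sq_forwardMean_sub_fejerMean_le (hτ j) hK

end IsMultiAutocorrelation

end HybridMeans

section HybridLimits

variable {s : ℕ} {r : (Fin s → ℤ) → ℝ}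

lemma tendsto_apply_atTop_atTop (j : Fin s) : Tendsto (fun τ : Fin s → ℕ => τ j) atTop atTop :=
  (Function.monotone_eval j).tendsto_atTop_atTop fun b => ⟨fun _ => b, le_rfl⟩

lemma tendsto_const_atTop_atTop : Tendsto (fun (T : ℕ) (_ : Fin s) => T) atTop atTop :=
  tendsto_atTop_atTop.mpr fun b => ⟨univ.sup b, fun _ hT j => (le_sup (mem_univ j)).trans hT⟩

lemma tendsto_update_sq_atTop (j : Fin s) :
    Tendsto (fun τ : Fin s → ℕ => Function.update τ j (τ j ^ 2)) atTop atTop :=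
  tendsto_atTop_mono
    (fun _ => le_update_iff.mpr ⟨Nat.le_self_pow two_ne_zero _, fun _ _ => le_rfl⟩) tendsto_id

lemma eventually_forall_pos : ∀ᶠ τ : Fin s → ℕ in atTop, ∀ j, 0 < τ j :=
  eventually_ge_atTop 1

namespace IsMultiAutocorrelation

lemma exists_tendsto_hybridMean_empty [NeZero s] (hr : IsMultiAutocorrelation r) :
    ∃ B, Tendsto (hybridMean r ∅) atTop (𝓝 B) := by
  set values : Set ℝ := hybridMean r ∅ '' {σ | ∀ j, 0 < σ j}
  have bddBelow : BddBelow values :=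
    ⟨0, Set.forall_mem_image.mpr fun _ hσ => hr.hybridMean_empty_nonneg hσ⟩
  have nonempty : values.Nonempty := ⟨_, 1, fun _ => one_pos, rfl⟩
  refine ⟨sInf values, tendsto_order.mpr ⟨fun b hb => ?_, fun b hb => ?_⟩⟩
  · filter_upwards [eventually_forall_pos] with τ hτ
    exact hb.trans_le (csInf_le bddBelow ⟨τ, hτ, rfl⟩)
  · obtain ⟨_, ⟨σ, hσ, rfl⟩, hσb⟩ := exists_lt_of_csInf_lt nonempty hb
    have bound_tendsto : Tendsto (fun τ : Fin s → ℕ =>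
        hybridMean r ∅ σ + ∑ j, 4 * (σ j : ℝ) / τ j) atTop (𝓝 (hybridMean r ∅ σ)) := by
      simpa using tendsto_const_nhds.add <| tendsto_finsetSum univ fun j _ =>
        (tendsto_const_div_atTop_nhds_zero_nat (4 * (σ j : ℝ))).comp (tendsto_apply_atTop_atTop j)
    filter_upwards [eventually_forall_pos, bound_tendsto.eventually_lt_const hσb] with τ hτ hτb
    exact (hr.hybridMean_empty_le_add hτ hσ).trans_lt hτb

lemma tendsto_hybridMean_insert (hr : IsMultiAutocorrelation r) {A : Finset (Fin s)} {j : Fin s}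
    (hj : j ∉ A) {B : ℝ} (hA : Tendsto (hybridMean r A) atTop (𝓝 B)) :
    Tendsto (hybridMean r (insert j A)) atTop (𝓝 B) := by
  have hupdate := hA.comp (tendsto_update_sq_atTop j)
  have error_tendsto : Tendsto (fun τ : Fin s → ℕ =>
      hybridMean r A τ - hybridMean r A (Function.update τ j (τ j ^ 2)) + 4 / τ j) atTop (𝓝 0) := by
    simpa using (hA.sub hupdate).add
      ((tendsto_const_div_atTop_nhds_zero_nat 4).comp (tendsto_apply_atTop_atTop j))
  have sq_tendsto : Tendsto (fun τ : Fin s → ℕ => (hybridMean r (insert j A) τ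
      - hybridMean r A (Function.update τ j (τ j ^ 2))) ^ 2) atTop (𝓝 0) := by
    refine squeeze_zero' (.of_forall fun _ => sq_nonneg _) ?_ error_tendsto
    filter_upwards [eventually_forall_pos] with τ hτ
    have : (τ j : ℝ) ≠ 0 := by exact_mod_cast (hτ j).ne'
    calc _ ≤ _ := hr.sq_hybridMean_insert_sub_le hj hτ (pow_pos (hτ j) 2)
      _ = _ := by push_cast; field_simp
  have diff_tendsto := tendsto_zero_iff_abs_tendsto_zero _ |>.mpr <| by
    simpa [Function.comp_def, Real.sqrt_sq_eq_abs] using sq_tendsto.sqrt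
  simpa using diff_tendsto.add hupdate

lemma exists_tendsto_hybridMean [NeZero s] (hr : IsMultiAutocorrelation r) :
    ∃ B, ∀ A, Tendsto (hybridMean r A) atTop (𝓝 B) := by
  obtain ⟨B, hB⟩ := hr.exists_tendsto_hybridMean_empty
  refine ⟨B, fun A => ?_⟩
  induction A using Finset.induction_on with
  | empty => exact hB
  | insert j A hj ih => exact hr.tendsto_hybridMean_insert hj ih

lemma tendsto_hybridMean_empty_const [NeZero s] (hr : IsMultiAutocorrelation r) {U : ℝ}
    (hU : Tendsto (fun T : ℕ => hybridMean r univ fun _ => T) atTop (𝓝 U)) :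
    Tendsto (fun T : ℕ => hybridMean r ∅ fun _ => T) atTop (𝓝 U) := by
  obtain ⟨B, hB⟩ := hr.exists_tendsto_hybridMean
  rw [tendsto_nhds_unique hU ((hB univ).comp tendsto_const_atTop_atTop)]
  exact (hB ∅).comp tendsto_const_atTop_atTop

end IsMultiAutocorrelation

end HybridLimits

section SimplexSums

/-- The sum of `(m - ∑ j, |h j|)₊ * r h` over `h ∈ (-H, H) ^ s`. The weight counts the `n` for which
the whole cube `n + ε ⬝ h` lies in a given interval of length `m ≤ H`. -/
noncomputable def simplexSum (H : ℕ) : {s : ℕ} → ℕ → ((Fin s → ℤ) → ℝ) → ℝ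
  | 0, m, r => m * r ![]
  | _ + 1, m, r =>
    ∑ t ∈ Ioo (-(H : ℤ)) H, simplexSum H (m - t.natAbs) fun h => r (Fin.cons t h)

/-- The total mass of the weights in `simplexSum`. -/
noncomputable def simplexMass (H s m : ℕ) : ℝ := simplexSum H (s := s) m fun _ => 1

lemma simplexMass_zero (H m : ℕ) : simplexMass H 0 m = m := by
  simp [simplexMass, simplexSum]

lemma simplexMass_succ (H s m : ℕ) :
    simplexMass H (s + 1) m = ∑ t ∈ Ioo (-(H : ℤ)) H, simplexMass H s (m - t.natAbs) := rfl

lemma simplexMass_nonneg (H s m : ℕ) : 0 ≤ simplexMass H s m := by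
  induction s generalizing m with
  | zero => simp [simplexMass_zero]
  | succ s ih =>
    rw [simplexMass_succ]
    exact Finset.sum_nonneg fun t _ => ih _

lemma simplexMass_le (H s m : ℕ) : simplexMass H s m ≤ m * (2 * H) ^ s := by
  induction s generalizing m with
  | zero => simp [simplexMass_zero]
  | succ s ih =>
    have hterm (t : ℤ) : simplexMass H s (m - t.natAbs) ≤ m * (2 * H) ^ s :=
      (ih _).trans (by gcongr; omega)
    have hcard : ((Ioo (-(H : ℤ)) H).card : ℝ) ≤ 2 * H := by
      exact_mod_cast (by rw [Int.card_Ioo]; omega : (Ioo (-(H : ℤ)) H).card ≤ 2 * H)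
    calc simplexMass H (s + 1) m
        ≤ (Ioo (-(H : ℤ)) H).card * (m * (2 * H) ^ s) := by
          rw [simplexMass_succ, ← nsmul_eq_mul]
          exact Finset.sum_le_card_nsmul _ _ _ fun t _ => hterm t
      _ ≤ 2 * H * (m * (2 * H) ^ s) := by gcongr
      _ = m * (2 * H) ^ (s + 1) := by ring

lemma sum_range_simplexMass_le {H m : ℕ} (hm : m ≤ H) (s : ℕ) :
    ∑ i ∈ range m, simplexMass H s (i + 1) ≤ simplexMass H (s + 1) m := by
  have hreflect : ∑ i ∈ range m, simplexMass H s (i + 1) =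
      ∑ t ∈ (range m).map Nat.castEmbedding, simplexMass H s (m - (t : ℤ).natAbs) := by
    rw [Finset.sum_map, ← Finset.sum_range_reflect]
    refine Finset.sum_congr rfl fun i hi => ?_
    rw [Nat.castEmbedding_apply, Int.natAbs_natCast]
    congr 1
    have := mem_range.mp hi
    omega
  rw [hreflect, simplexMass_succ]
  refine Finset.sum_le_sum_of_subset_of_nonneg ?_ fun t _ _ => simplexMass_nonneg _ _ _
  intro t
  simp only [Finset.mem_map, mem_range, Nat.castEmbedding_apply, mem_Ioo]
  rintro ⟨i, hi, rfl⟩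
  omega

lemma choose_le_simplexMass {H m : ℕ} (hm : m ≤ H) (s : ℕ) :
    ((m + s).choose (s + 1) : ℝ) ≤ simplexMass H s m := by
  induction s generalizing m with
  | zero => simp [simplexMass_zero]
  | succ s ih =>
    have hockeyStick : (m + (s + 1)).choose (s + 2) =
        ∑ i ∈ range m, (i + 1 + s).choose (s + 1) := by
      rcases m with _ | m
      · simp
      · simp only [add_assoc, add_comm 1 s, Nat.sum_range_add_choose]
        congr 1
        ring
    calc ((m + (s + 1)).choose (s + 2) : ℝ)
        = ∑ i ∈ range m, ((i + 1 + s).choose (s + 1) : ℝ) := by exact_mod_cast hockeyStick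
      _ ≤ ∑ i ∈ range m, simplexMass H s (i + 1) :=
          Finset.sum_le_sum fun i hi => ih (by have := mem_range.mp hi; omega)
      _ ≤ simplexMass H (s + 1) m := sum_range_simplexMass_le hm s

lemma pow_div_factorial_le_simplexMass (H s : ℕ) :
    (H : ℝ) ^ (s + 1) / (s + 1).factorial ≤ simplexMass H s H := by
  refine le_trans ?_ (choose_le_simplexMass le_rfl s)
  simpa using Nat.pow_le_choose (α := ℝ) (s + 1) (H + s)

lemma simplexMass_pos {H : ℕ} (hH : 0 < H) (s : ℕ) : 0 < simplexMass H s H :=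
  lt_of_lt_of_le (by positivity) (pow_div_factorial_le_simplexMass H s)

lemma tendsto_simplexMass_div_simplexMass_succ (s : ℕ) :
    Tendsto (fun H => simplexMass H s H / simplexMass H (s + 1) H) atTop (𝓝 0) := by
  have hbound : Tendsto (fun H : ℕ => (2 ^ s * (s + 2).factorial : ℝ) / H) atTop (𝓝 0) :=
    tendsto_const_div_atTop_nhds_zero_nat _
  refine squeeze_zero' (Eventually.of_forall fun H =>
    div_nonneg (simplexMass_nonneg _ _ _) (simplexMass_nonneg _ _ _)) ?_ hbound
  filter_upwards [eventually_gt_atTop 0] with H hH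
  calc simplexMass H s H / simplexMass H (s + 1) H
      ≤ (H * (2 * H) ^ s) / ((H : ℝ) ^ (s + 2) / (s + 2).factorial) := by
        gcongr
        · exact simplexMass_le H s H
        · exact pow_div_factorial_le_simplexMass H (s + 1)
    _ = 2 ^ s * (s + 2).factorial / H := by
        rw [mul_pow, pow_add]
        field_simp

lemma card_filter_sub_eq (m : ℕ) (t : ℤ) :
    #{p ∈ range m ×ˢ range m | (p.1 : ℤ) - p.2 = t} = m - t.natAbs := by
  rw [← card_range (m - t.natAbs)]
  symm
  refine Finset.card_nbij' (fun i => (i + t.toNat, i + (-t).toNat)) (fun p => min p.1 p.2)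
    ?_ ?_ ?_ ?_
  · intro i hi
    simp only [coe_range, Set.mem_Iio, coe_filter, mem_product, mem_range,
      Set.mem_ofPred_eq] at hi ⊢
    omega
  · rintro ⟨i, k⟩ hik
    simp only [coe_range, Set.mem_Iio, coe_filter, mem_product, mem_range,
      Set.mem_ofPred_eq] at hik ⊢
    omega
  · intro i _
    dsimp only
    omega
  · rintro ⟨i, k⟩ hik
    simp only [coe_filter, mem_product, mem_range, Set.mem_ofPred_eq, Prod.mk.injEq] at hik ⊢
    omega

lemma sum_triangle_mul_eq_sq_mul_fejerMean {H m : ℕ} (hm : m ≤ H) (q : ℤ → ℝ) :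
    ∑ t ∈ Ioo (-(H : ℤ)) H, ((m - t.natAbs : ℕ) : ℝ) * q t = (m : ℝ) ^ 2 * fejerMean m q := by
  have hmaps : ∀ p ∈ range m ×ˢ range m, (p.1 : ℤ) - p.2 ∈ Ioo (-(H : ℤ)) H := by
    intro p hp
    simp only [mem_product, mem_range, mem_Ioo] at hp ⊢
    omega
  have hfiber (t : ℤ) :
      ∑ p ∈ range m ×ˢ range m with (p.1 : ℤ) - p.2 = t, q ((p.1 : ℤ) - p.2) =
        ((m - t.natAbs : ℕ) : ℝ) * q t := by
    rw [Finset.sum_congr rfl fun p hp => by rw [(mem_filter.mp hp).2], sum_const,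
      card_filter_sub_eq, nsmul_eq_mul]
  rw [← Finset.sum_congr rfl fun t _ => hfiber t, Finset.sum_fiberwise_of_maps_to hmaps,
    Finset.sum_product, fejerMean]
  rcases m.eq_zero_or_pos with rfl | hm0
  · simp
  · field_simp

lemma sum_triangle {H m : ℕ} (hm : m ≤ H) :
    ∑ t ∈ Ioo (-(H : ℤ)) H, ((m - t.natAbs : ℕ) : ℝ) = (m : ℝ) ^ 2 := by
  have h := sum_triangle_mul_eq_sq_mul_fejerMean hm fun _ => 1
  simp only [mul_one] at h
  rw [h]
  rcases m.eq_zero_or_pos with rfl | hm0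
  · simp
  · rw [← weightedMean_fejerWeight, (isProbabilityWeight_fejerWeight hm0).weightedMean_one, mul_one]

lemma IsAutocorrelation.sum_simplexMass_mul_le {q : ℤ → ℝ} (hq : IsAutocorrelation q) {H m K : ℕ}
    (hm : m ≤ H) (hK : 0 < K) (s : ℕ) :
    ∑ t ∈ Ioo (-(H : ℤ)) H, simplexMass H s (m - t.natAbs) * q t ≤
      simplexMass H (s + 1) m * fejerMean K q + 4 * K * simplexMass H s m := by
  induction s generalizing m with
  | zero =>
    simp only [simplexMass_succ, simplexMass_zero, sum_triangle hm,
      sum_triangle_mul_eq_sq_mul_fejerMean hm]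
    rcases m.eq_zero_or_pos with rfl | hm0
    · simp
    · calc (m : ℝ) ^ 2 * fejerMean m q
          ≤ (m : ℝ) ^ 2 * (fejerMean K q + 4 * K / m) := by gcongr; exact hq.fejerMean_le_add hm0 hK
        _ = (m : ℝ) ^ 2 * fejerMean K q + 4 * K * m := by field_simp
  | succ s ih =>
    have hslice (u : ℤ) : ∑ t ∈ Ioo (-(H : ℤ)) H, simplexMass H s (m - t.natAbs - u.natAbs) * q t ≤
        simplexMass H (s + 1) (m - u.natAbs) * fejerMean K q
          + 4 * K * simplexMass H s (m - u.natAbs) := by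
      simpa only [Nat.sub_right_comm m] using ih (m := m - u.natAbs) (by omega)
    calc ∑ t ∈ Ioo (-(H : ℤ)) H, simplexMass H (s + 1) (m - t.natAbs) * q t
        = ∑ u ∈ Ioo (-(H : ℤ)) H, ∑ t ∈ Ioo (-(H : ℤ)) H,
            simplexMass H s (m - t.natAbs - u.natAbs) * q t := by
          simp only [simplexMass_succ, Finset.sum_mul]
          exact Finset.sum_comm
      _ ≤ _ := Finset.sum_le_sum fun u _ => hslice u
      _ = _ := by
          rw [Finset.sum_add_distrib, ← Finset.sum_mul, ← Finset.mul_sum, ← simplexMass_succ,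
            ← simplexMass_succ]

namespace IsMultiAutocorrelation

lemma simplexSum_le_productMean {s : ℕ} {r : (Fin s → ℤ) → ℝ}
    (hr : IsMultiAutocorrelation r) {H m K : ℕ} (hm : m ≤ H) (hK : 0 < K) :
    simplexSum H m r ≤ simplexMass H s m * productMean (fun _ => fejerWeight K) r
      + 4 * K * (s * simplexMass H (s - 1) m) := by
  induction s generalizing m with
  | zero => simp [simplexSum, simplexMass, productMean]
  | succ s ih =>
    set q : ℤ → ℝ := fun t => productMean (fun _ => fejerWeight K) fun h => r (Fin.cons t h)
    have hq : IsAutocorrelation q :=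
      isAutocorrelation_productMean (fun _ => isProbabilityWeight_fejerWeight hK) hr.apply_cons
    have hmean : productMean (fun _ => fejerWeight K) r = fejerMean K q :=
      weightedMean_fejerWeight K q
    have herror : s * ∑ t ∈ Ioo (-(H : ℤ)) H, simplexMass H (s - 1) (m - t.natAbs) =
        s * simplexMass H s m := by
      rcases s with _ | s
      · simp
      · rfl
    calc simplexSum H m r
        ≤ ∑ t ∈ Ioo (-(H : ℤ)) H, (simplexMass H s (m - t.natAbs) * q t
            + 4 * K * (s * simplexMass H (s - 1) (m - t.natAbs))) :=
          Finset.sum_le_sum fun t _ => ih (hr.cons_left t) (by omega)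
      _ = ∑ t ∈ Ioo (-(H : ℤ)) H, simplexMass H s (m - t.natAbs) * q t
            + 4 * K * (s * simplexMass H s m) := by
          rw [Finset.sum_add_distrib, ← Finset.mul_sum, ← Finset.mul_sum, herror]
      _ ≤ _ := by
          rw [hmean, Nat.add_sub_cancel]
          push_cast
          linarith [hq.sum_simplexMass_mul_le hm hK s]

lemma eventually_simplexSum_div_simplexMass_lt {s : ℕ} [NeZero s] {r : (Fin s → ℤ) → ℝ}
    (hr : IsMultiAutocorrelation r) {U V : ℝ} (hUV : U < V)
    (hU : Tendsto (fun T => hybridMean r ∅ fun _ => T) atTop (𝓝 U)) :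
    ∀ᶠ H in atTop, simplexSum H H r / simplexMass H s H < V := by
  obtain ⟨K, hKV, hK⟩ := ((hU.eventually_lt_const hUV).and (eventually_gt_atTop 0)).exists
  rw [hybridMean, piecewise_empty] at hKV
  obtain ⟨p, hp⟩ := Nat.exists_eq_succ_of_ne_zero (NeZero.ne s)
  subst hp
  have hbound := ((tendsto_simplexMass_div_simplexMass_succ p).const_mul
    (4 * K * (p + 1 : ℝ))).const_add (productMean (fun _ => fejerWeight K) r)
  rw [mul_zero, add_zero] at hbound
  filter_upwards [hbound.eventually_lt_const hKV, eventually_gt_atTop 0] with H hH hH0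
  refine lt_of_le_of_lt ?_ hH
  have hmass := simplexMass_pos hH0 (p + 1)
  calc simplexSum H H r / simplexMass H (p + 1) H
      ≤ (simplexMass H (p + 1) H * productMean (fun _ => fejerWeight K) r
          + 4 * K * ((p + 1 : ℕ) * simplexMass H p H)) / simplexMass H (p + 1) H := by
        gcongr
        exact hr.simplexSum_le_productMean le_rfl hK
    _ = _ := by
        push_cast
        field_simp

end IsMultiAutocorrelation

end SimplexSums

open ComplexConjugate

section MultiplicativeDerivatives

/-- The multiplicative derivative `n ↦ f (n + t) * conj (f n)`. -/
noncomputable def mulDeriv (t : ℤ) (f : ℤ → ℂ) : ℤ → ℂ := fun n => f (n + t) * conj (f n)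

/-- The Gowers norm of a function supported in `[0, H)`, computed over `ℤ` and without the root and
the normalization: the sum over `t ∈ (-H, H) ^ s` of the sums of the `s`-fold derivatives of `f`. -/
noncomputable def gowersSum (H : ℕ) : ℕ → (ℤ → ℂ) → ℂ
  | 0, f => ∑ n ∈ Ico (0 : ℤ) H, f n
  | s + 1, f => ∑ t ∈ Ioo (-(H : ℤ)) H, gowersSum H s (mulDeriv t f)

lemma mulDeriv_const_one (t : ℤ) : mulDeriv t (fun _ => 1) = fun _ => 1 := by
  funext n
  simp [mulDeriv]

lemma support_mulDeriv_subset (t : ℤ) (f : ℤ → ℂ) :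
    Function.support (mulDeriv t f) ⊆ Function.support f := by
  intro n
  simp only [Function.mem_support, mulDeriv]
  exact mt fun hn => by rw [hn, map_zero, mul_zero]

lemma mulDeriv_indicator_Ico (x y t : ℤ) (g : ℤ → ℂ) :
    mulDeriv t ((Set.Ico x y).indicator g) =
      (Set.Ico (max x (x - t)) (min y (y - t))).indicator (mulDeriv t g) := by
  funext n
  have hmem : n ∈ Set.Ico (max x (x - t)) (min y (y - t)) ↔
      n + t ∈ Set.Ico x y ∧ n ∈ Set.Ico x y := by
    simp only [Set.mem_Ico]
    omega
  by_cases hn : n ∈ Set.Ico x y <;> by_cases hnt : n + t ∈ Set.Ico x y <;>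
    simp [mulDeriv, Set.indicator, hmem, hn, hnt]

lemma gowersSum_zero (H s : ℕ) : gowersSum H s 0 = 0 := by
  induction s with
  | zero => simp [gowersSum]
  | succ s ih =>
    refine Finset.sum_eq_zero fun t _ => ?_
    rw [show mulDeriv t 0 = 0 by funext n; simp [mulDeriv], ih]

lemma gowersSum_indicator_one {H : ℕ} (s : ℕ) {x y : ℤ} (hx : 0 ≤ x) (hy : y ≤ H) :
    gowersSum H s ((Set.Ico x y).indicator fun _ => 1) = (simplexMass H s (y - x).toNat : ℂ) := by
  induction s generalizing x y with
  | zero =>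
    rw [simplexMass_zero, gowersSum, ← Finset.coe_Ico,
      Finset.sum_indicator_subset _ (Finset.Ico_subset_Ico hx hy)]
    simp
  | succ s ih =>
    rw [simplexMass_succ, gowersSum, Complex.ofReal_sum]
    refine Finset.sum_congr rfl fun t _ => ?_
    rw [mulDeriv_indicator_Ico, mulDeriv_const_one, ih (by omega) (by omega)]
    congr 3
    omega

end MultiplicativeDerivatives

section GowersNorm

lemma gowersNorm_succ_nonneg (L s : ℕ) (F : ℕ → ℂ) : 0 ≤ gowersNorm L (s + 1) F := by
  cases s with
  | zero => exact norm_nonneg _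
  | succ s =>
    have hpow : Even (2 ^ (s + 1)) := even_two.pow_of_ne_zero s.succ_ne_zero
    exact Real.rpow_nonneg (mul_nonneg (by positivity) (Finset.sum_nonneg fun h _ =>
      hpow.pow_nonneg _)) _

lemma gowersNorm_add_two_pow (L s : ℕ) (F : ℕ → ℂ) :
    gowersNorm L (s + 2) F ^ 2 ^ (s + 2) = (L : ℝ)⁻¹ * ∑ h ∈ range L,
      gowersNorm L (s + 1) (fun n => F ((n + h) % L) * conj (F (n % L))) ^ 2 ^ (s + 1) := by
  have hexp : (2 : ℝ) ^ (s + 2) = (2 ^ (s + 2) : ℕ) := by norm_cast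
  rw [gowersNorm, hexp, Real.rpow_inv_natCast_pow _ (by positivity)]
  exact mul_nonneg (by positivity) (Finset.sum_nonneg fun h _ =>
    pow_nonneg (gowersNorm_succ_nonneg _ _ _) _)

lemma sum_range_bmod {M : Type*} [AddCommMonoid M] {H : ℕ} (hH : 0 < H) (φ : ℤ → M) :
    ∑ h ∈ range (2 * H), φ (Int.bmod h (2 * H)) = ∑ t ∈ Ico (-(H : ℤ)) H, φ t := by
  refine Finset.sum_nbij' (fun h => Int.bmod h (2 * H)) (fun t => (t % (2 * H : ℕ)).toNat)
    ?_ ?_ ?_ ?_ fun _ _ => rfl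
  · intro h _
    have hle := Int.le_bmod (x := h) (m := 2 * H) (by omega)
    have hlt := Int.bmod_lt (x := h) (m := 2 * H) (by omega)
    rw [mem_Ico]
    omega
  · intro t _
    have := Int.emod_lt_of_pos t (b := (2 * H : ℕ)) (by omega)
    rw [mem_range]
    omega
  · intro h hh
    have := mem_range.mp hh
    rw [Int.bmod_emod, Int.emod_eq_of_lt (by omega) (by omega), Int.toNat_natCast]
  · intro t ht
    have := mem_Ico.mp ht
    rw [Int.toNat_of_nonneg (Int.emod_nonneg _ (by omega)), Int.emod_bmod,
      Int.bmod_eq_of_le (by omega) (by omega)]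

variable {H : ℕ} {f : ℤ → ℂ}

lemma gowersSum_one (hf : Function.support f ⊆ Set.Ico 0 (H : ℤ)) :
    gowersSum H 1 f = ((‖∑ n ∈ Ico (0 : ℤ) H, f n‖ ^ 2 : ℝ) : ℂ) := by
  have htranslate : ∀ n ∈ Ico (0 : ℤ) H,
      ∑ t ∈ Ioo (-(H : ℤ)) H, f (n + t) = ∑ m ∈ Ico (0 : ℤ) H, f m := by
    intro n hn
    have hsupp : Function.support (fun t => f (n + t)) ⊆ ↑(Ioo (-(H : ℤ)) H) := by
      intro t ht
      have hnt := hf (show n + t ∈ Function.support f from ht)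
      simp only [mem_Ico, Set.mem_Ico, coe_Ioo, Set.mem_Ioo] at hn hnt ⊢
      omega
    rw [← finsum_eq_sum_of_support_subset _ hsupp,
      ← finsum_eq_sum_of_support_subset f (by rwa [Finset.coe_Ico])]
    exact finsum_comp_equiv (Equiv.addLeft n)
  calc gowersSum H 1 f
      = ∑ n ∈ Ico (0 : ℤ) H, (∑ t ∈ Ioo (-(H : ℤ)) H, f (n + t)) * conj (f n) := by
        simp only [gowersSum, mulDeriv, Finset.sum_mul]
        exact Finset.sum_comm
    _ = (∑ m ∈ Ico (0 : ℤ) H, f m) * conj (∑ n ∈ Ico (0 : ℤ) H, f n) := by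
        rw [map_sum, Finset.mul_sum]
        exact Finset.sum_congr rfl fun n hn => by rw [htranslate n hn]
    _ = ((‖∑ n ∈ Ico (0 : ℤ) H, f n‖ ^ 2 : ℝ) : ℂ) := by
        rw [Complex.mul_conj, Complex.normSq_eq_norm_sq]

lemma sum_Ico_gowersSum_mulDeriv (hH : 0 < H) (hf : Function.support f ⊆ Set.Ico 0 (H : ℤ))
    (s : ℕ) :
    ∑ t ∈ Ico (-(H : ℤ)) H, gowersSum H s (mulDeriv t f) = gowersSum H (s + 1) f := by
  have hend : mulDeriv (-H) f = 0 := by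
    funext n
    by_contra hn
    have hn₁ := hf (left_ne_zero_of_mul hn)
    have hn₂ := hf (support_mulDeriv_subset _ _ hn)
    simp only [Set.mem_Ico] at hn₁ hn₂
    omega
  rw [← Finset.Ioo_insert_left (by omega : -(H : ℤ) < H), Finset.sum_insert (by simp), hend,
    gowersSum_zero, zero_add, gowersSum]

variable {F : ℕ → ℂ}

/-- The modulus `2 * H` leaves enough room to prevent wrap-around: a negative `x ≥ -H` is sent to a
residue in `[H, 2 * H)`, again outside the support of `f`. -/
lemma apply_mod_eq_of_emod_eq (hf : Function.support f ⊆ Set.Ico 0 (H : ℤ))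
    (hF : ∀ n < 2 * H, F n = f n) {k : ℕ} {x : ℤ} (hx₁ : -H ≤ x) (hx₂ : x < 2 * H)
    (hk : x % (2 * H : ℕ) = k % (2 * H : ℕ)) : F (k % (2 * H)) = f x := by
  have hzero {y : ℤ} (hy : y ∉ Set.Ico 0 (H : ℤ)) : f y = 0 :=
    Function.notMem_support.mp fun hy' => hy (hf hy')
  rw [hF _ (Nat.mod_lt _ (by omega)), Int.natCast_mod, ← hk]
  rcases le_or_gt 0 x with hx | hx
  · rw [Int.emod_eq_of_lt hx (by omega)]
  · rw [← Int.add_emod_right, Int.emod_eq_of_lt (by omega) (by omega), hzero, hzero] <;>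
      simp only [Set.mem_Ico] <;> omega

lemma sum_range_mod_eq_sum_Ico (hH : 0 < H) (hf : Function.support f ⊆ Set.Ico 0 (H : ℤ))
    (hF : ∀ n < 2 * H, F n = f n) :
    ∑ n ∈ range (2 * H), F (n % (2 * H)) = ∑ n ∈ Ico (0 : ℤ) H, f n := by
  have hbmod (n : ℕ) : F (n % (2 * H)) = f (Int.bmod n (2 * H)) := by
    have hle := Int.le_bmod (x := n) (m := 2 * H) (by omega)
    have hlt := Int.bmod_lt (x := n) (m := 2 * H) (by omega)
    exact apply_mod_eq_of_emod_eq hf hF (by omega) (by omega) Int.bmod_emod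
  simp only [hbmod, sum_range_bmod hH]
  refine (Finset.sum_subset (Finset.Ico_subset_Ico (by omega) le_rfl) fun n _ hn => ?_).symm
  exact Function.notMem_support.mp fun hn' => hn (by simpa using hf hn')

lemma mul_conj_mod_eq_mulDeriv (hf : Function.support f ⊆ Set.Ico 0 (H : ℤ))
    (hF : ∀ n < 2 * H, F n = f n) (h : ℕ) {n : ℕ} (hn : n < 2 * H) :
    F ((n + h) % (2 * H)) * conj (F (n % (2 * H))) = mulDeriv (Int.bmod h (2 * H)) f n := by
  rw [Nat.mod_eq_of_lt hn, hF n hn, mulDeriv]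
  by_cases hfn : f n = 0
  · simp [hfn]
  · have hnH := hf hfn
    rw [Set.mem_Ico] at hnH
    have hle := Int.le_bmod (x := h) (m := 2 * H) (by omega)
    have hlt := Int.bmod_lt (x := h) (m := 2 * H) (by omega)
    rw [apply_mod_eq_of_emod_eq hf hF (x := n + Int.bmod h (2 * H)) (by omega) (by omega)]
    rw [Int.add_emod, Int.bmod_emod, ← Int.add_emod, Nat.cast_add]

lemma gowersNorm_pow_mul_eq_gowersSum (hH : 0 < H) (s : ℕ)
    (hf : Function.support f ⊆ Set.Ico 0 (H : ℤ)) (hF : ∀ n < 2 * H, F n = f n) :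
    ((gowersNorm (2 * H) (s + 1) F ^ 2 ^ (s + 1) * (2 * H) ^ (s + 2) : ℝ) : ℂ) =
      gowersSum H (s + 1) f := by
  induction s generalizing f F with
  | zero =>
    rw [gowersSum_one hf, gowersNorm, sum_range_mod_eq_sum_Ico hH hf hF, norm_mul, norm_inv,
      Complex.norm_natCast]
    congr 1
    push_cast
    field_simp
  | succ s ih =>
    have hderiv (h : ℕ) : ((gowersNorm (2 * H) (s + 1)
          (fun n => F ((n + h) % (2 * H)) * conj (F (n % (2 * H)))) ^ 2 ^ (s + 1)
            * (2 * H) ^ (s + 2) : ℝ) : ℂ) =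
        gowersSum H (s + 1) (mulDeriv (Int.bmod h (2 * H)) f) :=
      ih ((support_mulDeriv_subset _ f).trans hf) fun n hn => mul_conj_mod_eq_mulDeriv hf hF h hn
    rw [← sum_Ico_gowersSum_mulDeriv hH hf, ← sum_range_bmod hH, ← Finset.sum_congr rfl
      fun h _ => hderiv h, ← Complex.ofReal_sum, gowersNorm_add_two_pow, ← Finset.sum_mul]
    congr 1
    push_cast
    field_simp
    ring

lemma gowersNorm_truncSeq_pow_mul (hH : 0 < H) (s : ℕ) {b : ℕ → ℂ} {g : ℤ → ℂ}
    (hg : ∀ m : ℕ, g m = b (m + 1)) :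
    ((gowersNorm (2 * H) (s + 1) (truncSeq b H) ^ 2 ^ (s + 1) * (2 * H) ^ (s + 2) : ℝ) : ℂ) =
      gowersSum H (s + 1) ((Set.Ico 0 (H : ℤ)).indicator g) :=
  gowersNorm_pow_mul_eq_gowersSum hH s Set.support_indicator_subset fun m _ => by
    simp [truncSeq, Set.indicator, hg]

lemma gowersNorm_truncSeq_one_pow_mul (hH : 0 < H) (s : ℕ) :
    gowersNorm (2 * H) (s + 1) (truncSeq (fun _ => 1) H) ^ 2 ^ (s + 1) * (2 * H) ^ (s + 2) =
      simplexMass H (s + 1) H := by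
  have h := gowersNorm_truncSeq_pow_mul hH s (b := fun _ => 1) (g := fun _ => 1) fun _ => rfl
  rw [gowersSum_indicator_one _ le_rfl le_rfl, sub_zero, Int.toNat_natCast] at h
  exact_mod_cast h

lemma UsShort_nonneg {s : ℕ} [NeZero s] (H : ℕ) (b : ℕ → ℂ) : 0 ≤ UsShort s H b := by
  obtain ⟨p, rfl⟩ := Nat.exists_eq_succ_of_ne_zero (NeZero.ne s)
  exact div_nonneg (gowersNorm_succ_nonneg _ _ _) (gowersNorm_succ_nonneg _ _ _)

lemma UsShort_pow_eq {s : ℕ} [NeZero s] (hH : 0 < H) {b : ℕ → ℂ} {g : ℤ → ℂ}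
    (hg : ∀ m : ℕ, g m = b (m + 1)) :
    UsShort s H b ^ 2 ^ s =
      (gowersSum H s ((Set.Ico 0 (H : ℤ)).indicator g)).re / simplexMass H s H := by
  obtain ⟨p, hp⟩ := Nat.exists_eq_succ_of_ne_zero (NeZero.ne s)
  subst hp
  rw [← gowersNorm_truncSeq_pow_mul hH p hg, Complex.ofReal_re,
    ← gowersNorm_truncSeq_one_pow_mul hH p, UsShort, div_pow,
    mul_div_mul_right _ _ (by positivity)]

end GowersNorm

section FolnerSequences

open scoped BigOperators symmDiff

/-- Følner sequences in the additive semigroup `ℕ`: asymptotically invariant under the shift by `1`,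
hence under all shifts. -/
structure IsFolnerSeq (I : ℕ → Finset ℕ) : Prop where
  eventually_nonempty : ∀ᶠ N in atTop, (I N).Nonempty
  tendsto_card_symmDiff_div_card :
    Tendsto (fun N => (#((I N).image (· + 1) ∆ I N) : ℝ) / #(I N)) atTop (𝓝 0)

lemma isFolnerSeq_Icc {lo hi : ℕ → ℕ}
    (hcard : Tendsto (fun N => #(Icc (lo N) (hi N))) atTop atTop) :
    IsFolnerSeq fun N => Icc (lo N) (hi N) where
  eventually_nonempty :=
    (hcard.eventually_gt_atTop 0).mono fun _ hN => card_pos.mp hN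
  tendsto_card_symmDiff_div_card := by
    have hle (N : ℕ) : #((Icc (lo N) (hi N)).image (· + 1) ∆ Icc (lo N) (hi N)) ≤ 2 := by
      refine (card_le_card fun n hn => ?_).trans (card_le_two (a := lo N) (b := hi N + 1))
      simp only [image_add_right_Icc, mem_symmDiff, mem_Icc] at hn
      simp only [mem_insert, mem_singleton]
      omega
    refine squeeze_zero (fun N => by positivity) (fun N => ?_)
      ((tendsto_natCast_atTop_atTop.comp hcard).const_div_atTop (2 : ℝ))
    simp only [Function.comp_apply]
    gcongr
    exact_mod_cast hle N

lemma abs_sum_sub_sum_le {α : Type*} [DecidableEq α] (A B : Finset α) {φ : α → ℝ} {C : ℝ}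
    (hφ : ∀ x, |φ x| ≤ C) : |∑ x ∈ A, φ x - ∑ x ∈ B, φ x| ≤ #(A ∆ B) * C := by
  have hsum (D : Finset α) : |∑ x ∈ D, φ x| ≤ #D * C := by
    simpa using norm_sum_le_of_le (f := φ) D fun x _ => hφ x
  have hcard : #(A ∆ B) = #(A \ B) + #(B \ A) :=
    card_union_of_disjoint disjoint_sdiff_sdiff
  rw [← sum_sdiff_sub_sum_sdiff, hcard]
  push_cast
  linarith [abs_sub (∑ x ∈ A \ B, φ x) (∑ x ∈ B \ A, φ x), hsum (A \ B), hsum (B \ A)]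

namespace IsFolnerSeq

variable {I : ℕ → Finset ℕ} {φ : ℤ → ℝ} {C l : ℝ}

lemma tendsto_expect_add_one_sub (hI : IsFolnerSeq I) (hφ : ∀ n, |φ n| ≤ C) :
    Tendsto (fun N => 𝔼 n ∈ I N, φ (n + 1) - 𝔼 n ∈ I N, φ n) atTop (𝓝 0) := by
  have hbound := hI.tendsto_card_symmDiff_div_card.mul_const C
  rw [zero_mul] at hbound
  refine squeeze_zero_norm (fun N => ?_) hbound
  have himage : ∑ n ∈ (I N).image (· + 1), φ (n : ℕ) = ∑ n ∈ I N, φ (n + 1) := by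
    rw [sum_image (add_left_injective 1).injOn]
    simp only [Nat.cast_add, Nat.cast_one]
  rw [expect_eq_sum_div_card, expect_eq_sum_div_card, ← sub_div, ← himage, Real.norm_eq_abs,
    abs_div, Nat.abs_cast, div_mul_eq_mul_div]
  gcongr
  exact abs_sum_sub_sum_le _ _ (φ := fun n : ℕ => φ n) fun n => hφ n

lemma tendsto_expect_add_one_iff (hI : IsFolnerSeq I) (hφ : ∀ n, |φ n| ≤ C) :
    Tendsto (fun N => 𝔼 n ∈ I N, φ (n + 1)) atTop (𝓝 l) ↔
      Tendsto (fun N => 𝔼 n ∈ I N, φ n) atTop (𝓝 l) := by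
  have h := hI.tendsto_expect_add_one_sub hφ
  exact ⟨fun hl => by simpa using hl.sub h, fun hl => by simpa using hl.add h⟩

lemma tendsto_expect_add (hI : IsFolnerSeq I) (hφ : ∀ n, |φ n| ≤ C)
    (hl : Tendsto (fun N => 𝔼 n ∈ I N, φ n) atTop (𝓝 l)) (k : ℤ) :
    Tendsto (fun N => 𝔼 n ∈ I N, φ (n + k)) atTop (𝓝 l) := by
  induction k with
  | zero => simpa using hl
  | succ k ih =>
    have h := (hI.tendsto_expect_add_one_iff (φ := fun n => φ (n + k)) fun n => hφ _).mpr ih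
    simpa only [add_assoc, add_comm (1 : ℤ)] using h
  | pred k ih =>
    refine (hI.tendsto_expect_add_one_iff (φ := fun n => φ (n + (-k - 1))) fun n => hφ _).mp ?_
    simpa only [add_assoc, add_sub_cancel] using ih

end IsFolnerSeq

end FolnerSequences

section IteratedDerivatives

/-- The iterated multiplicative derivative of `f` in the directions `h 0, h 1, …`. -/
noncomputable def iterDeriv : {s : ℕ} → (Fin s → ℤ) → (ℤ → ℂ) → ℤ → ℂ
  | 0, _, f => f
  | _ + 1, h, f => iterDeriv (Fin.tail h) (mulDeriv (h 0) f)

lemma iterDeriv_cons {s : ℕ} (t : ℤ) (h : Fin s → ℤ) (f : ℤ → ℂ) :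
    iterDeriv (Fin.cons t h : Fin (s + 1) → ℤ) f = iterDeriv h (mulDeriv t f) := by
  simp [iterDeriv]

lemma norm_mulDeriv_le_one {f : ℤ → ℂ} (hf : ∀ n, ‖f n‖ ≤ 1) (t n : ℤ) : ‖mulDeriv t f n‖ ≤ 1 := by
  rw [mulDeriv, norm_mul, RCLike.norm_conj]
  exact mul_le_one₀ (hf _) (norm_nonneg _) (hf _)

lemma norm_iterDeriv_le_one {s : ℕ} (h : Fin s → ℤ) {f : ℤ → ℂ} (hf : ∀ n, ‖f n‖ ≤ 1) (n : ℤ) :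
    ‖iterDeriv h f n‖ ≤ 1 := by
  induction s generalizing f with
  | zero => exact hf n
  | succ s ih => exact ih _ (norm_mulDeriv_le_one hf _)

lemma abs_re_iterDeriv_le_one {s : ℕ} (h : Fin s → ℤ) {f : ℤ → ℂ} (hf : ∀ n, ‖f n‖ ≤ 1) (n : ℤ) :
    |(iterDeriv h f n).re| ≤ 1 :=
  (Complex.abs_re_le_norm _).trans (norm_iterDeriv_le_one h hf n)

lemma mulDeriv_comm (t u : ℤ) (f : ℤ → ℂ) :
    mulDeriv t (mulDeriv u f) = mulDeriv u (mulDeriv t f) := by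
  funext n
  simp only [mulDeriv, map_mul]
  rw [add_right_comm]
  ring

lemma iterDeriv_mulDeriv {s : ℕ} (h : Fin s → ℤ) (t : ℤ) (f : ℤ → ℂ) :
    iterDeriv h (mulDeriv t f) = mulDeriv t (iterDeriv h f) := by
  induction s generalizing f with
  | zero => rfl
  | succ s ih => rw [iterDeriv, iterDeriv, mulDeriv_comm, ih]

lemma exists_iterDeriv_update_eq_mulDeriv {s : ℕ} (h : Fin s → ℤ) (j : Fin s) {f : ℤ → ℂ}
    (hf : ∀ n, ‖f n‖ ≤ 1) :
    ∃ g : ℤ → ℂ, (∀ n, ‖g n‖ ≤ 1) ∧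
      ∀ t, iterDeriv (Function.update h j t) f = mulDeriv t g := by
  induction s generalizing f with
  | zero => exact j.elim0
  | succ s ih =>
    cases j using Fin.cases with
    | zero =>
      refine ⟨iterDeriv (Fin.tail h) f, norm_iterDeriv_le_one _ hf, fun t => ?_⟩
      rw [iterDeriv, Function.update_self, Fin.tail_update_zero, iterDeriv_mulDeriv]
    | succ j =>
      obtain ⟨g, hg, heq⟩ := ih (Fin.tail h) j (norm_mulDeriv_le_one hf (h 0))
      refine ⟨g, hg, fun t => ?_⟩
      rw [iterDeriv, Function.update_of_ne (Fin.succ_ne_zero j).symm, Fin.tail_update_succ, heq]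

lemma mulDeriv_neg (t : ℤ) (f : ℤ → ℂ) (n : ℤ) :
    mulDeriv (-t) f n = conj (mulDeriv t f (n - t)) := by
  simp [mulDeriv, sub_eq_add_neg, mul_comm]

lemma re_iterDeriv_cons_neg {s : ℕ} (t : ℤ) (h : Fin s → ℤ) (f : ℤ → ℂ) (n : ℤ) :
    (iterDeriv (Fin.cons (-t) h : Fin (s + 1) → ℤ) f n).re =
      (iterDeriv (Fin.cons t h : Fin (s + 1) → ℤ) f (n - t)).re := by
  rw [iterDeriv_cons, iterDeriv_cons, iterDeriv_mulDeriv, iterDeriv_mulDeriv, mulDeriv_neg,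
    Complex.conj_re]

end IteratedDerivatives

section Correlations

open scoped BigOperators

lemma posSemidef_gram_real {X E : Type*} [NormedAddCommGroup E] [InnerProductSpace ℝ E]
    (v : X → E) : (Matrix.gram ℝ v).PosSemidef := by
  refine ⟨Matrix.isHermitian_gram ℝ v, fun x => ?_⟩
  have hsq : (x.sum fun i xi => x.sum fun j xj => star xi * Matrix.gram ℝ v i j * xj) =
      ‖x.sum fun i xi => xi • v i‖ ^ 2 := by
    rw [← real_inner_self_eq_norm_sq, Finsupp.sum_inner]
    simp [Finsupp.inner_sum, real_inner_smul_left, real_inner_smul_right, mul_comm]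
  rw [hsq]
  positivity

lemma posSemidef_of_tendsto {X ι : Type*} {l : Filter ι} [l.NeBot] {M : ι → Matrix X X ℝ}
    {A : Matrix X X ℝ} (hM : ∀ᶠ i in l, (M i).PosSemidef)
    (hA : ∀ x y, Tendsto (fun i => M i x y) l (𝓝 (A x y))) : A.PosSemidef := by
  refine ⟨Matrix.ext fun x y => ?_, fun v => ?_⟩
  · refine tendsto_nhds_unique_of_eventuallyEq (hA y x) (hA x y) ?_
    filter_upwards [hM] with i hi
    exact hi.isHermitian.apply x y
  · refine ge_of_tendsto (tendsto_finsetSum _ fun x _ => tendsto_finsetSum _ fun y _ =>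
      ((hA x y).const_mul _).mul_const _) ?_
    filter_upwards [hM] with i hi
    exact hi.2 v

/-- `r h` is the limit along `I` of the means of the real part of the `s`-fold multiplicative
derivative of `f` in the directions `h`. -/
def HasCorrelations (I : ℕ → Finset ℕ) (f : ℤ → ℂ) {s : ℕ} (r : (Fin s → ℤ) → ℝ) : Prop :=
  ∀ h, Tendsto (fun N => 𝔼 n ∈ I N, (iterDeriv h f n).re) atTop (𝓝 (r h))

variable {I : ℕ → Finset ℕ} {f : ℤ → ℂ} {s : ℕ}

lemma HasCorrelations.mulDeriv {r : (Fin (s + 1) → ℤ) → ℝ} (hr : HasCorrelations I f r) (t : ℤ) :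
    HasCorrelations I (mulDeriv t f) fun h => r (Fin.cons t h) := fun h => by
  simpa only [iterDeriv_cons] using hr (Fin.cons t h)

namespace IsFolnerSeq

lemma hasCorrelations_natAbs (hI : IsFolnerSeq I) (hf : ∀ n, ‖f n‖ ≤ 1) {ρ : (Fin s → ℕ) → ℝ}
    (hρ : ∀ h : Fin s → ℕ,
      Tendsto (fun N => 𝔼 n ∈ I N, (iterDeriv (fun j => h j) f n).re) atTop (𝓝 (ρ h))) :
    HasCorrelations I f fun h => ρ fun j => (h j).natAbs := by
  induction s generalizing f with
  | zero => exact fun h => by simpa [iterDeriv] using hρ _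
  | succ s ih =>
    have hnat (k : ℕ) (h : Fin s → ℤ) : Tendsto
        (fun N => 𝔼 n ∈ I N, (iterDeriv (Fin.cons (k : ℤ) h : Fin (s + 1) → ℤ) f n).re) atTop
        (𝓝 (ρ (Fin.cons k fun j => (h j).natAbs))) := by
      simp only [iterDeriv_cons]
      exact ih (norm_mulDeriv_le_one hf k) (ρ := fun h => ρ (Fin.cons k h))
        (fun h => hρ (Fin.cons k h)) h
    refine Fin.consCases fun t h => ?_
    have hnatAbs : (fun j => ((Fin.cons t h : Fin (s + 1) → ℤ) j).natAbs) =
        Fin.cons t.natAbs fun j => (h j).natAbs := by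
      ext j
      cases j using Fin.cases <;> rfl
    simp only [hnatAbs]
    obtain ⟨k, rfl | rfl⟩ := t.eq_nat_or_neg
    · exact hnat k h
    · simp only [re_iterDeriv_cons_neg, sub_eq_add_neg, Int.natAbs_neg, Int.natAbs_natCast]
      exact hI.tendsto_expect_add (abs_re_iterDeriv_le_one _ hf) (hnat k h) (-k)

lemma isAutocorrelation_of_tendsto (hI : IsFolnerSeq I) (hf : ∀ n, ‖f n‖ ≤ 1) {d : ℤ → ℝ}
    (hd : ∀ t, Tendsto (fun N => 𝔼 n ∈ I N, (mulDeriv t f n).re) atTop (𝓝 (d t))) :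
    IsAutocorrelation d where
  posSemidef := by
    refine posSemidef_of_tendsto (l := atTop)
      (M := fun N => (#(I N) : ℝ)⁻¹ • ∑ n ∈ I N, Matrix.gram ℝ fun i : ℤ => f (n + i))
      (.of_forall fun N => ?_) fun i k => ?_
    · exact (Matrix.posSemidef_sum _ fun n _ => posSemidef_gram_real _).smul (by positivity)
    · have hre (t n : ℤ) : |(mulDeriv t f n).re| ≤ 1 :=
        (Complex.abs_re_le_norm _).trans (norm_mulDeriv_le_one hf t n)
      refine (hI.tendsto_expect_add (hre (i - k)) (hd (i - k)) k).congr fun N => ?_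
      rw [expect_eq_sum_div_card, div_eq_inv_mul]
      simp [Matrix.sum_apply, Complex.inner, mulDeriv, add_assoc, mul_comm]
  apply_zero_le_one := by
    refine le_of_tendsto (hd 0) (hI.eventually_nonempty.mono fun N hN => ?_)
    exact expect_le hN fun n _ => (Complex.re_le_norm _).trans (norm_mulDeriv_le_one hf 0 n)

lemma isMultiAutocorrelation (hI : IsFolnerSeq I) (hf : ∀ n, ‖f n‖ ≤ 1) {r : (Fin s → ℤ) → ℝ}
    (hr : HasCorrelations I f r) : IsMultiAutocorrelation r := fun j h => by
  obtain ⟨g, hg, heq⟩ := exists_iterDeriv_update_eq_mulDeriv h j hf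
  refine hI.isAutocorrelation_of_tendsto hg fun t => ?_
  simpa only [heq] using hr (Function.update h j t)

lemma tendsto_expect_re_gowersSum (hI : IsFolnerSeq I) (hf : ∀ n, ‖f n‖ ≤ 1)
    {r : (Fin s → ℤ) → ℝ} (hr : HasCorrelations I f r) {H : ℕ} {x y : ℤ} (hx : 0 ≤ x)
    (hy : y ≤ H) (k : ℤ) :
    Tendsto (fun N => 𝔼 n ∈ I N,
      (gowersSum H s ((Set.Ico x y).indicator fun m => f (n + (k + m)))).re) atTop
      (𝓝 (simplexSum H (y - x).toNat r)) := by
  induction s generalizing f x y with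
  | zero =>
    have hIco : (Ico (0 : ℤ) H).filter (fun m => x ≤ m ∧ m < y) = Ico x y := by
      ext m
      simp only [mem_filter, mem_Ico]
      omega
    have hterm (m : ℤ) : Tendsto (fun N => 𝔼 n ∈ I N, (f (n + (k + m))).re) atTop (𝓝 (r ![])) :=
      hI.tendsto_expect_add (fun n => (Complex.abs_re_le_norm _).trans (hf n)) (hr ![]) (k + m)
    have hsum := tendsto_finsetSum (Ico x y) fun m _ => hterm m
    simp only [← expect_sum_comm] at hsum
    simpa [gowersSum, simplexSum, Set.indicator, ← sum_filter, hIco] using hsum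
  | succ s ih =>
    have hterm (t : ℤ) : Tendsto (fun N => 𝔼 n ∈ I N, (gowersSum H s (mulDeriv t
        ((Set.Ico x y).indicator fun m => f (n + (k + m))))).re) atTop
        (𝓝 (simplexSum H ((y - x).toNat - t.natAbs) fun h => r (Fin.cons t h))) := by
      have hlength : (min y (y - t) - max x (x - t)).toNat = (y - x).toNat - t.natAbs := by omega
      have hshift (n : ℤ) :
          mulDeriv t (fun m => f (n + (k + m))) = fun m => mulDeriv t f (n + (k + m)) := by
        funext m
        simp only [mulDeriv, add_assoc]
      simp only [mulDeriv_indicator_Ico, hshift, ← hlength]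
      exact ih (norm_mulDeriv_le_one hf t) (hr.mulDeriv t) (hx.trans (le_max_left _ _))
        ((min_le_left _ _).trans hy)
    simpa only [gowersSum, simplexSum, Complex.re_sum, expect_sum_comm] using
      tendsto_finsetSum _ fun t _ => hterm t

end IsFolnerSeq

end Correlations

section CubeProducts

lemma epsDot_cons {s : ℕ} (b : Bool) (ε : Fin s → Bool) (t : ℕ) (h : Fin s → ℕ) :
    epsDot (Fin.cons b ε : Fin (s + 1) → Bool) (Fin.cons t h) =
      (if b then t else 0) + epsDot ε h := by
  simp [epsDot, Fin.sum_univ_succ]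

lemma card_filter_cons {s : ℕ} (b : Bool) (ε : Fin s → Bool) :
    #{j | (Fin.cons b ε : Fin (s + 1) → Bool) j = true} =
      (if b then 1 else 0) + #{j | ε j = true} := by
  simp only [card_filter, Fin.sum_univ_succ, Fin.cons_zero, Fin.cons_succ]

lemma prod_fin_succ_bool {M : Type*} [CommMonoid M] {s : ℕ} (F : (Fin (s + 1) → Bool) → M) :
    ∏ ε, F ε = (∏ ε, F (Fin.cons true ε)) * ∏ ε, F (Fin.cons false ε) := by
  rw [← Fintype.prod_equiv (Fin.consEquiv fun _ => Bool) (fun p => F (Fin.cons p.1 p.2)) F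
    fun _ => rfl, Fintype.prod_prod_type, Fintype.prod_bool]

lemma cubeProd_cons {s : ℕ} (a : ℕ → ℂ) (t : ℕ) (h : Fin s → ℕ) (n : ℕ) :
    cubeProd a (Fin.cons t h : Fin (s + 1) → ℕ) n =
      conj (cubeProd a h (n + t)) * cubeProd a h n := by
  simp only [cubeProd, map_prod, prod_fin_succ_bool]
  congr 1 <;> refine prod_congr rfl fun ε _ => ?_
  · simp only [epsDot_cons, card_filter_cons, if_true, add_assoc]
    rcases Nat.mod_two_eq_zero_or_one #{j | ε j = true} with hε | hε <;>
      simp [Nat.add_mod, hε]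
  · simp [epsDot_cons, card_filter_cons]

lemma iterDeriv_natCast_eq_iterate_conj_cubeProd {s : ℕ} (f : ℤ → ℂ) (h : Fin s → ℕ) (n : ℕ) :
    iterDeriv (fun j => (h j : ℤ)) f n = conj^[s] (cubeProd (fun m => f m) h n) := by
  induction s generalizing n with
  | zero => simp [iterDeriv, cubeProd, epsDot]
  | succ s ih =>
    induction h using Fin.consCases with
    | cons t h =>
    have htail :
        (Fin.tail fun j => ((Fin.cons t h : Fin (s + 1) → ℕ) j : ℤ)) = fun j => (h j : ℤ) := rfl
    rw [iterDeriv, iterDeriv_mulDeriv, htail, Fin.cons_zero, mulDeriv, ← Nat.cast_add, ih, ih,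
      cubeProd_cons, Function.iterate_succ_apply, map_mul, Complex.conj_conj, iterate_map_mul,
      ← Function.iterate_succ_apply' (conj : ℂ → ℂ), Function.iterate_succ_apply]

lemma re_iterate_conj (k : ℕ) (z : ℂ) : (conj^[k] z).re = z.re := by
  induction k generalizing z with
  | zero => rfl
  | succ k ih => rw [Function.iterate_succ_apply, ih, Complex.conj_re]

lemma re_iterDeriv_natCast {s : ℕ} (f : ℤ → ℂ) (h : Fin s → ℕ) (n : ℕ) :
    (iterDeriv (fun j => (h j : ℤ)) f n).re = (cubeProd (fun m => f m) h n).re := by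
  rw [iterDeriv_natCast_eq_iterate_conj_cubeProd, re_iterate_conj]

end CubeProducts

section BoxMeans

lemma sum_piFinset_const_succ {α M : Type*} [AddCommMonoid M] {s : ℕ}
    (A : Finset α) (F : (Fin (s + 1) → α) → M) :
    ∑ h ∈ Fintype.piFinset (fun _ : Fin (s + 1) => A), F h =
      ∑ t ∈ A, ∑ h ∈ Fintype.piFinset (fun _ : Fin s => A), F (Fin.cons t h) := by
  classical
  rw [← sum_product']
  refine (sum_equiv (Fin.consEquiv fun _ => α) (fun p => ?_) fun _ _ => rfl).symm
  simp [Fin.forall_fin_succ]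

lemma productMean_forwardWeight {s : ℕ} (T : ℕ) (r : (Fin s → ℤ) → ℝ) :
    productMean (fun _ => forwardWeight T) r =
      ((T : ℝ) ^ s)⁻¹ * ∑ h ∈ Fintype.piFinset (fun _ : Fin s => Icc 1 T), r fun j => h j := by
  induction s with
  | zero => simp [productMean, Matrix.empty_eq]
  | succ s ih =>
    have htail : Fin.tail (fun _ : Fin (s + 1) => forwardWeight T) = fun _ => forwardWeight T := rfl
    have hcons (t : ℕ) (h : Fin s → ℕ) : (fun j => ((Fin.cons t h : Fin (s + 1) → ℕ) j : ℤ)) =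
        Fin.cons (t : ℤ) fun j => (h j : ℤ) := by
      ext j
      cases j using Fin.cases <;> rfl
    have hIcc (F : ℕ → ℝ) : ∑ t ∈ Icc 1 T, F t = ∑ i ∈ range T, F (i + 1) := by
      rw [range_eq_Ico, sum_Ico_add', zero_add]
      rfl
    rw [productMean, weightedMean_forwardWeight, forwardMean, htail, sum_piFinset_const_succ, hIcc]
    simp only [ih, hcons, Nat.cast_add, Nat.cast_one]
    rw [← mul_sum, ← mul_assoc, pow_succ', mul_inv]

end BoxMeans

section StarSeminorm

open scoped BigOperators

lemma limsup_limsup_le_of_forall_gt {ι κ : Type*} {l : Filter ι} {l' : Filter κ} [l.NeBot]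
    [l'.NeBot] {F : ι → κ → ℝ} {u : ℝ} (hF : ∀ i j, 0 ≤ F i j)
    (hu : ∀ v > u, ∀ᶠ i in l, ∀ᶠ j in l', F i j < v) :
    limsup (fun i => limsup (F i) l') l ≤ u := by
  refine le_of_forall_gt_imp_ge_of_dense fun v hv => ?_
  have hle : ∀ᶠ i in l, ∀ᶠ j in l', F i j ≤ v :=
    (hu v hv).mono fun _ h => h.mono fun _ => le_of_lt
  have hcobdd (i : ι) : IsCoboundedUnder (· ≤ ·) l' (F i) :=
    (isBoundedUnder_of ⟨0, hF i⟩ : IsBoundedUnder (· ≥ ·) l' (F i)).isCoboundedUnder_le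
  have hnonneg : ∀ᶠ i in l, 0 ≤ limsup (F i) l' := hle.mono fun i hi =>
    le_limsup_of_frequently_le (Frequently.of_forall (hF i)) (isBoundedUnder_of_eventually_le hi)
  exact limsup_le_of_le (isBoundedUnder_of_eventually_ge hnonneg).isCoboundedUnder_le
    (hle.mono fun i hi => limsup_le_of_le (hcobdd i) hi)

lemma pow_expect_le_expect_pow {ι : Type*} (A : Finset ι) {φ : ι → ℝ} (hφ : ∀ i ∈ A, 0 ≤ φ i)
    {p : ℕ} (hp : p ≠ 0) : (𝔼 i ∈ A, φ i) ^ p ≤ 𝔼 i ∈ A, φ i ^ p := by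
  obtain ⟨k, rfl⟩ := Nat.exists_eq_succ_of_ne_zero hp
  rw [expect_eq_sum_div_card, expect_eq_sum_div_card, div_pow, pow_succ (#A : ℝ), ← div_div]
  gcongr
  exact pow_sum_div_card_le_sum_pow hφ k

variable {I : ℕ → Finset ℕ} {f : ℤ → ℂ} {s : ℕ}

lemma pow_expect_UsShort_le [NeZero s] (f : ℤ → ℂ) {H : ℕ} (hH : 0 < H) (A : Finset ℕ) :
    (𝔼 n ∈ A, UsShort s H fun m => f (n + m : ℕ)) ^ 2 ^ s ≤
      (𝔼 n ∈ A, (gowersSum H s ((Set.Ico 0 (H : ℤ)).indicator fun m => f (n + (1 + m)))).re) /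
        simplexMass H s H := by
  have hpow (n : ℕ) : (UsShort s H fun m => f (n + m : ℕ)) ^ 2 ^ s =
      (gowersSum H s ((Set.Ico 0 (H : ℤ)).indicator fun m => f (n + (1 + m)))).re /
        simplexMass H s H :=
    UsShort_pow_eq hH fun m => by push_cast; rw [add_comm 1 (m : ℤ)]
  refine (pow_expect_le_expect_pow A (fun n _ => UsShort_nonneg H _) (by positivity)).trans_eq ?_
  simp only [hpow, expect_div]

lemma IsFolnerSeq.eventually_expect_UsShort_lt [NeZero s] (hI : IsFolnerSeq I)
    (hf : ∀ n, ‖f n‖ ≤ 1) {r : (Fin s → ℤ) → ℝ} (hr : HasCorrelations I f r) {u v : ℝ}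
    (hu : 0 ≤ u) (huv : u < v)
    (hlim : Tendsto (fun T => hybridMean r univ fun _ => T) atTop (𝓝 (u ^ 2 ^ s))) :
    ∀ᶠ H in atTop, ∀ᶠ N in atTop, 𝔼 n ∈ I N, UsShort s H (fun m => f (n + m : ℕ)) < v := by
  have hr' := hI.isMultiAutocorrelation hf hr
  have hpow : u ^ 2 ^ s < v ^ 2 ^ s := pow_lt_pow_left₀ huv hu (by positivity)
  filter_upwards [eventually_gt_atTop 0, hr'.eventually_simplexSum_div_simplexMass_lt hpow
    (hr'.tendsto_hybridMean_empty_const hlim)] with H hH hlt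
  have hgowers := hI.tendsto_expect_re_gowersSum hf hr (H := H) le_rfl le_rfl 1
  rw [sub_zero, Int.toNat_natCast] at hgowers
  filter_upwards [(hgowers.div_const (simplexMass H s H)).eventually_lt_const hlt] with N hN
  exact lt_of_pow_lt_pow_left₀ _ (hu.trans huv.le) ((pow_expect_UsShort_le f hH (I N)).trans_lt hN)

lemma re_cesaroAvg (I : ℕ → Finset ℕ) (φ : ℕ → ℂ) (N : ℕ) :
    (cesaroAvg I φ N).re = 𝔼 n ∈ I N, (φ n).re := by
  rw [cesaroAvg, expect_eq_sum_div_card, ← Complex.re_sum, ← Complex.ofReal_natCast,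
    ← Complex.ofReal_inv, Complex.re_ofReal_mul, inv_mul_eq_div]

lemma IsFolnerSeq.hasCorrelations_of_tendsto_cesaroAvg (hI : IsFolnerSeq I)
    (hf : ∀ n, ‖f n‖ ≤ 1) {c : (Fin s → ℕ) → ℂ}
    (hc : ∀ h : Fin s → ℕ, Tendsto (cesaroAvg I (cubeProd (fun m => f m) h)) atTop (𝓝 (c h))) :
    HasCorrelations I f fun h => (c fun j => (h j).natAbs).re := by
  refine hI.hasCorrelations_natAbs hf (ρ := fun h => (c h).re) fun h => ?_
  simpa only [re_iterDeriv_natCast, re_cesaroAvg, Function.comp_def] using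
    (Complex.continuous_re.tendsto _).comp (hc h)

lemma hybridMean_univ_re_natAbs (c : (Fin s → ℕ) → ℂ) (T : ℕ) :
    hybridMean (fun h => (c fun j => (h j).natAbs).re) univ (fun _ => T) =
      (((T : ℂ) ^ s)⁻¹ * ∑ h ∈ Fintype.piFinset (fun _ : Fin s => Icc 1 T), c h).re := by
  have hcast : ((T : ℂ) ^ s)⁻¹ = (((T : ℝ) ^ s)⁻¹ : ℝ) := by push_cast; rfl
  rw [hcast, Complex.re_ofReal_mul, Complex.re_sum, hybridMean, piecewise_univ]
  exact productMean_forwardWeight T _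

theorem star_seminorm_le_four_mul_uniformity_seminorm_general
    {I : ℕ → Finset ℕ} (hI : IsFolnerSeq I) {a : ℕ → ℂ} (ha : ∀ n, ‖a n‖ ≤ 1)
    {s : ℕ} (hs : 1 ≤ s) {u : ℝ} (hu : 0 ≤ u) {c : (Fin s → ℕ) → ℂ}
    (hc : ∀ h : Fin s → ℕ, Tendsto (cesaroAvg I (cubeProd a h)) atTop (𝓝 (c h)))
    (hlim : Tendsto (fun H : ℕ => ((H : ℂ) ^ s)⁻¹ *
        ∑ h ∈ Fintype.piFinset (fun _ : Fin s => Icc 1 H), c h) atTop (𝓝 ((u : ℂ) ^ 2 ^ s))) :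
    limsup (fun H : ℕ => limsup (fun N : ℕ =>
        (#(I N) : ℝ)⁻¹ * ∑ n ∈ I N, UsShort s H (fun m => a (n + m))) atTop) atTop ≤ u := by
  have : NeZero s := ⟨by omega⟩
  let f (n : ℤ) : ℂ := a n.toNat
  have hf (n : ℤ) : ‖f n‖ ≤ 1 := ha _
  have hr := hI.hasCorrelations_of_tendsto_cesaroAvg hf hc
  have hmean : Tendsto (fun T => hybridMean (fun h => (c fun j => (h j).natAbs).re) univ
      fun _ => T) atTop (𝓝 (u ^ 2 ^ s)) := by
    simp only [hybridMean_univ_re_natAbs]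
    have hre : ((u : ℂ) ^ 2 ^ s).re = u ^ 2 ^ s := by norm_cast
    exact hre ▸ (Complex.continuous_re.tendsto _).comp hlim
  simp only [inv_mul_eq_div, ← expect_eq_sum_div_card]
  exact limsup_limsup_le_of_forall_gt
    (fun H N => expect_nonneg fun n _ => UsShort_nonneg H fun m => a (n + m))
    fun v hv => hI.eventually_expect_UsShort_lt hf hr hu hv hmean

end StarSeminorm

/-- Proposition 2.5 of the paper (Cesàro case): if `a` is bounded by `1` and admits
correlations for Cesàro averages on intervals `I` with `|I_N| → ∞`, then
`‖a‖_{U^s_*(I)} ≤ 4 ‖a‖_{U^s(I)}`.  The seminorm `u = ‖a‖_{U^s(I)}` is characterized by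
`u^{2^s} = lim_{H} 𝔼_{h∈[H]^s} (lim_N 𝔼_{n∈I_N} ∏_{ε} C^{|ε|} a(n+ε·h))`, and the star
seminorm is `limsup_H limsup_N 𝔼_{n∈I_N} ‖S_n a‖_{U^s[H]}`. -/
theorem star_seminorm_le_four_mul_uniformity_seminorm
    (lo hi : ℕ → ℕ) (I : ℕ → Finset ℕ)
    (hI : ∀ N, I N = Finset.Icc (lo N) (hi N))
    (hIcard : Tendsto (fun N => (I N).card) atTop atTop)
    (a : ℕ → ℂ) (ha : ∀ n, ‖a n‖ ≤ 1)
    (s : ℕ) (hs : 1 ≤ s)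
    (hcorr : ∀ (k : ℕ) (sh : Fin k → ℕ) (cj : Fin k → Bool),
      ∃ L : ℂ, Tendsto (cesaroAvg I fun m => ∏ j,
        if cj j then (starRingEnd ℂ) (a (m + sh j)) else a (m + sh j)) atTop (𝓝 L))
    (u : ℝ) (hu : 0 ≤ u)
    (c : (Fin s → ℕ) → ℂ)
    (hc : ∀ h : Fin s → ℕ, Tendsto (cesaroAvg I (cubeProd a h)) atTop (𝓝 (c h)))
    (hlim : Tendsto (fun H : ℕ => ((H : ℂ) ^ s)⁻¹ *
        ∑ h ∈ Fintype.piFinset (fun _ : Fin s => Finset.Icc 1 H), c h) atTop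
        (𝓝 ((u : ℂ) ^ (2 ^ s)))) :
    limsup (fun H : ℕ => limsup (fun N : ℕ =>
        ((I N).card : ℝ)⁻¹ * ∑ n ∈ I N, UsShort s H (fun m => a (n + m))) atTop) atTop
      ≤ 4 * u := by
  have hFolner : IsFolnerSeq I := funext hI ▸ isFolnerSeq_Icc (by simpa only [hI] using hIcard)
  exact (star_seminorm_le_four_mul_uniformity_seminorm_general hFolner ha hs hu hc hlim).trans
    (by linarith)
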